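/- arXiv:2509.03048 — 2 statements merged into one kernel-verified Lean document; each statement's English description precedes it below -/
import Mathlib

section
/- For the elephant random walk with memory parameter p ∈ [0, 1) on a Cayley graph that is the d-regular tree T_d (d ≥ 3), almost surely liminf_{n→∞} Δ_n/n ≥ 1 − 2/d > 0; in particular, almost surely the walk returns to the root only finitely often, i.e. ∑_{n≥1} 1(Δ_n = 0) < ∞ almost surely. -/
open MeasureTheory ProbabilityTheory Filter

noncomputable section

/-- The Cayley graph of a group with respect to a finite set of generators. -/
def cayleyGraph {G : Type*} [Group G] (S : Finset G) : SimpleGraph G where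
  Adj x y := x ≠ y ∧ (y * x⁻¹ ∈ S ∨ x * y⁻¹ ∈ S)
  symm := by
    constructor
    rintro x y ⟨h1, h2⟩
    refine ⟨h1.symm, ?_⟩
    rcases h2 with h | h
    · exact Or.inr h
    · exact Or.inl h
  loopless := ⟨fun x h => h.1 rfl⟩

/-- The elephant random walk (ERW) with memory parameter `p` on the Cayley graph of a
group `G` with respect to a symmetric generating set `S` of cardinality `d`, not
containing the identity, whose Cayley graph is a tree (hence the `d`-regular tree
`T_d`).  The steps are `g 1, g 2, …` (the value of `g 0` is irrelevant).  The law of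
the process is characterised by: `g 1` is uniform on `S`, and, conditionally on the
first `n` steps being `s 1, …, s n`, the next step `g (n+1)` equals `a ∈ S` with
probability `p * N/n + ((1-p)/(d-1)) * (n-N)/n`, where `N = #{1 ≤ k ≤ n : s k = a}`;
this is precisely the probability that the walker, recalling a uniform past epoch
`D ∈ {1, …, n}`, repeats `g D` with probability `p` and takes any given other step
with probability `(1-p)/(d-1)`. -/
structure ERW (G : Type*) [Group G] [DecidableEq G] (d : ℕ) (p : ℝ)
    (Ω : Type*) [MeasurableSpace Ω] (P : Measure Ω) where
  S : Finset G
  card_S : S.card = d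
  symm_S : ∀ s ∈ S, s⁻¹ ∈ S
  one_not_mem : (1 : G) ∉ S
  tree : (cayleyGraph S).IsTree
  g : ℕ → Ω → G
  meas_g : ∀ n a, MeasurableSet {ω | g n ω = a}
  mem_S : ∀ n, 1 ≤ n → ∀ ω, g n ω ∈ S
  init : ∀ a ∈ S, (P {ω | g 1 ω = a}).toReal = 1 / d
  update : ∀ n, 1 ≤ n → ∀ s : ℕ → G, ∀ a ∈ S,
    (P ({ω | ∀ k ∈ Finset.Icc 1 n, g k ω = s k} ∩ {ω | g (n + 1) ω = a})).toReal
      = (p * ((((Finset.Icc 1 n).filter fun k => s k = a).card : ℝ) / n)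
          + (1 - p) / ((d : ℝ) - 1)
            * (((n : ℝ) - (((Finset.Icc 1 n).filter fun k => s k = a).card : ℝ)) / n))
        * (P {ω | ∀ k ∈ Finset.Icc 1 n, g k ω = s k}).toReal

namespace ERW

variable {G : Type*} [Group G] [DecidableEq G] {d : ℕ} {p : ℝ}
  {Ω : Type*} [MeasurableSpace Ω] {P : Measure Ω}

/-- The position `w n = g n ⋯ g 1` of the walk at time `n`. -/
def pos (E : ERW G d p Ω P) : ℕ → Ω → G
  | 0 => fun _ => 1
  | n + 1 => fun ω => E.g (n + 1) ω * E.pos n ω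

/-- `Δ n`: the (word-metric) distance of the walker from the root at time `n`. -/
def dist (E : ERW G d p Ω P) (n : ℕ) (ω : Ω) : ℕ :=
  (cayleyGraph E.S).dist 1 (E.pos n ω)

/-- `N n a`: the number of `a`-steps taken by time `n`. -/
def count (E : ERW G d p Ω P) (a : G) (n : ℕ) (ω : Ω) : ℕ :=
  ((Finset.Icc 1 n).filter fun k => E.g k ω = a).card

/-- `γ n`: the unique step decreasing the distance to the root by 1
(a junk value if the walker is at the root). -/
def gammaStep (E : ERW G d p Ω P) (n : ℕ) (ω : Ω) : G :=
  @Classical.epsilon G ⟨1⟩ fun s =>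
    s ∈ E.S ∧ (cayleyGraph E.S).dist 1 (s * E.pos n ω) + 1 = E.dist n ω

/-- `ℓ n = N n (γ n)` if the walker is away from the root, and `0` otherwise. -/
def ell (E : ERW G d p Ω P) (n : ℕ) (ω : Ω) : ℕ :=
  if E.pos n ω = 1 then 0 else E.count (E.gammaStep n ω) n ω

/-- `Ξ n = (1/n) ∑_{k=0}^{n-1} (ℓ k / k - 1(Δ k > 0)/d)` (with the convention
`ℓ 0 / 0 = 0`, automatic since division by zero yields zero). -/
def Xi (E : ERW G d p Ω P) (n : ℕ) (ω : Ω) : ℝ :=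
  (1 / n) * ∑ k ∈ Finset.range n,
    ((E.ell k ω : ℝ) / k - (if 0 < E.dist k ω then 1 else 0) / d)

/-- The natural filtration `F n` generated by the steps up to time `n`. -/
def filt (E : ERW G d p Ω P) (n : ℕ) : MeasurableSpace Ω :=
  ⨆ k ∈ Finset.Icc 1 n, MeasurableSpace.comap (E.g k) ⊤

/-- `G n = E[Δ (n+1) - Δ n | F n]`. -/
def drift (E : ERW G d p Ω P) (n : ℕ) : Ω → ℝ :=
  P[fun ω => ((E.dist (n + 1) ω : ℝ) - (E.dist n ω : ℝ)) | E.filt n]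

/-- The martingale differences `Y k = Δ k - Δ (k-1) - G (k-1)`. -/
def mdiff (E : ERW G d p Ω P) (k : ℕ) (ω : Ω) : ℝ :=
  (E.dist k ω : ℝ) - (E.dist (k - 1) ω : ℝ) - E.drift (k - 1) ω

/-- The martingale `M n = ∑_{k=1}^n Y k`. -/
def mart (E : ERW G d p Ω P) (n : ℕ) (ω : Ω) : ℝ :=
  ∑ k ∈ Finset.Icc 1 n, E.mdiff k ω

end ERW

/-- The rate `r n`: `√n` in the subcritical regime `p < p_d = (d+1)/(2d)`,
`√(n / log n)` in the critical regime `p = p_d`, and `n ^ (d(1-p)/(d-1))` in the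
supercritical regime `p > p_d`. -/
def rate (p : ℝ) (d : ℕ) (n : ℕ) : ℝ :=
  if p < ((d : ℝ) + 1) / (2 * d) then Real.sqrt n
  else if p = ((d : ℝ) + 1) / (2 * d) then Real.sqrt ((n : ℝ) / Real.log n)
  else (n : ℝ) ^ ((d : ℝ) * (1 - p) / ((d : ℝ) - 1))

/-!
Fix a rule that selects one generator at each time from the past alone. The indicators that the next
step is the selected one, each minus its conditional probability, are bounded and pairwise
orthogonal, so their averages tend to zero almost surely. For a constant rule `a`, the conditional
probability is affine in the past frequency `xₙ` of `a`, whence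
`xₙ = α * (x₀ + ⋯ + xₙ₋₁) / n + (1 - α) / d + o(1)` with `|α| < 1`. Averaging does not increase the
limsup of `|xₙ - 1 / d|`, so this recursion contracts and `xₙ → 1 / d`.

It follows that the conditional probability of any selected generator tends to `1 / d`, and hence so
does the frequency of hits of any rule. In a tree at most one generator leads from the current
position towards the root, and every other step increases the distance. Selecting that generator
gives `Δₙ ≥ n - 2 * #{hits before n}`, so the speed is at least `1 - 2 / d`.
-/

open scoped Topology

section CesaroAverages

lemma eventually_average_le_add {u : ℕ → ℝ} {b ε : ℝ} (hu : ∀ᶠ n in atTop, u n ≤ b)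
    (hε : 0 < ε) : ∀ᶠ n : ℕ in atTop, (n : ℝ)⁻¹ * ∑ k ∈ Finset.range n, u k ≤ b + ε := by
  have excess_tendsto : Tendsto (fun n => max (u n - b) 0) atTop (𝓝 0) :=
    tendsto_const_nhds.congr' (hu.mono fun n hn => (max_eq_right (sub_nonpos.2 hn)).symm)
  filter_upwards [excess_tendsto.cesaro.eventually_le_const hε, eventually_ne_atTop 0]
    with n hn hn0
  have hn0' : (n : ℝ) ≠ 0 := Nat.cast_ne_zero.2 hn0
  calc (n : ℝ)⁻¹ * ∑ k ∈ Finset.range n, u k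
      ≤ (n : ℝ)⁻¹ * ∑ k ∈ Finset.range n, (b + max (u k - b) 0) := by
        gcongr with k
        linarith [le_max_left (u k - b) 0]
    _ = b + (n : ℝ)⁻¹ * ∑ k ∈ Finset.range n, max (u k - b) 0 := by
        simp [Finset.sum_add_distrib, mul_add, hn0']
    _ ≤ b + ε := by gcongr

lemma norm_sum_range_le_sq_subsequence {E : Type*} [SeminormedAddCommGroup E] (y : ℕ → E)
    (n : ℕ) :
    ‖∑ k ∈ Finset.range n, y k‖ ≤ ‖∑ k ∈ Finset.range (n.sqrt ^ 2), y k‖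
      + ∑ k ∈ Finset.Ico (n.sqrt ^ 2) ((n.sqrt + 1) ^ 2), ‖y k‖ := by
  have sqrt_sq_le : n.sqrt ^ 2 ≤ n := n.sqrt_le'
  rw [← Finset.sum_range_add_sum_Ico _ sqrt_sq_le]
  refine (norm_add_le _ _).trans (add_le_add le_rfl ((norm_sum_le _ _).trans ?_))
  exact Finset.sum_le_sum_of_subset_of_nonneg (Finset.Ico_subset_Ico_right n.lt_succ_sqrt'.le)
    fun _ _ _ => norm_nonneg _

variable {E : Type*} [NormedAddCommGroup E] [NormedSpace ℝ E] {y : ℕ → E} {α B : ℝ}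

lemma eventually_norm_le_of_sub_smul_average_tendsto_zero
    (hy : Tendsto (fun n : ℕ => y n - α • (n : ℝ)⁻¹ • ∑ k ∈ Finset.range n, y k) atTop (𝓝 0))
    {b ε : ℝ} (hb : ∀ᶠ n in atTop, ‖y n‖ ≤ b) (hε : 0 < ε) :
    ∀ᶠ n in atTop, ‖y n‖ ≤ |α| * (b + ε) + ε := by
  filter_upwards [eventually_average_le_add hb hε, hy.norm.eventually_le_const (by simpa using hε)]
    with n havg herr
  have norm_average_le : ‖(n : ℝ)⁻¹ • ∑ k ∈ Finset.range n, y k‖ ≤ b + ε := by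
    rw [norm_smul, norm_inv, RCLike.norm_natCast]
    exact (mul_le_mul_of_nonneg_left (norm_sum_le _ _) (by positivity)).trans havg
  calc ‖y n‖ ≤ ‖α • (n : ℝ)⁻¹ • ∑ k ∈ Finset.range n, y k‖
        + ‖y n - α • (n : ℝ)⁻¹ • ∑ k ∈ Finset.range n, y k‖ := norm_le_insert' _ _
    _ ≤ |α| * (b + ε) + ε := by
        rw [norm_smul, Real.norm_eq_abs]
        gcongr

lemma tendsto_zero_of_sub_smul_average_tendsto_zero (hα : |α| < 1) (hB : ∀ n, ‖y n‖ ≤ B)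
    (hy : Tendsto (fun n : ℕ => y n - α • (n : ℝ)⁻¹ • ∑ k ∈ Finset.range n, y k) atTop (𝓝 0)) :
    Tendsto y atTop (𝓝 0) := by
  set L := limsup (fun n => ‖y n‖) atTop
  have bdd_le : IsBoundedUnder (· ≤ ·) atTop fun n => ‖y n‖ := isBoundedUnder_of ⟨B, hB⟩
  have bdd_ge : IsBoundedUnder (· ≥ ·) atTop fun n => ‖y n‖ :=
    isBoundedUnder_of ⟨0, fun n => norm_nonneg _⟩
  have L_le : ∀ ε > 0, L ≤ |α| * (L + ε + ε) + ε := fun ε hε =>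
    limsup_le_of_le bdd_ge.isCoboundedUnder_le <|
      eventually_norm_le_of_sub_smul_average_tendsto_zero hy
        ((eventually_lt_of_limsup_lt (lt_add_of_pos_right L hε) bdd_le).mono fun n hn => hn.le) hε
  have L_contracts : L ≤ |α| * L :=
    le_of_forall_pos_le_add fun ε hε => by
      nlinarith [L_le (ε / 3) (by positivity)]
  have L_nonpos : L ≤ 0 := by nlinarith
  exact tendsto_zero_iff_norm_tendsto_zero.2 <| tendsto_of_le_liminf_of_limsup_le
    (le_liminf_of_le bdd_le.isCoboundedUnder_ge (.of_forall fun n => norm_nonneg _))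
    L_nonpos bdd_le bdd_ge

lemma tendsto_of_sub_smul_average_tendsto {l : E} (hα : |α| < 1) (hB : ∀ n, ‖y n‖ ≤ B)
    (hy : Tendsto (fun n : ℕ => y n - α • (n : ℝ)⁻¹ • ∑ k ∈ Finset.range n, y k) atTop
      (𝓝 ((1 - α) • l))) :
    Tendsto y atTop (𝓝 l) := by
  refine tendsto_sub_nhds_zero_iff.1 <|
    tendsto_zero_of_sub_smul_average_tendsto_zero (B := B + ‖l‖) hα
      (fun n => (norm_sub_le _ _).trans (by grw [hB n])) ?_
  refine (tendsto_sub_nhds_zero_iff.2 hy).congr' ?_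
  filter_upwards [eventually_ne_atTop 0] with n hn
  have average_sub : (n : ℝ)⁻¹ • ∑ k ∈ Finset.range n, (y k - l)
      = (n : ℝ)⁻¹ • ∑ k ∈ Finset.range n, y k - l := by
    rw [Finset.sum_sub_distrib, Finset.sum_const, Finset.card_range, smul_sub,
      ← Nat.cast_smul_eq_nsmul ℝ, inv_smul_smul₀ (Nat.cast_ne_zero.2 hn)]
  rw [average_sub]
  module

lemma tendsto_average_zero_of_sq_subsequence
    (hsub : Tendsto (fun k : ℕ => ‖∑ i ∈ Finset.range (k ^ 2), y i‖ / (k : ℝ) ^ 2) atTop (𝓝 0))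
    (hblock : Tendsto (fun k : ℕ =>
      (∑ i ∈ Finset.Ico (k ^ 2) ((k + 1) ^ 2), ‖y i‖) / (k : ℝ) ^ 2) atTop (𝓝 0)) :
    Tendsto (fun n : ℕ => (n : ℝ)⁻¹ • ∑ k ∈ Finset.range n, y k) atTop (𝓝 0) := by
  have sqrt_tendsto : Tendsto Nat.sqrt atTop atTop :=
    tendsto_atTop.2 fun b => (eventually_ge_atTop (b * b)).mono fun n hn => Nat.le_sqrt.2 hn
  have bound_tendsto := (hsub.add hblock).comp sqrt_tendsto
  rw [add_zero] at bound_tendsto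
  refine squeeze_zero_norm' ?_ bound_tendsto
  filter_upwards [eventually_gt_atTop 0] with n hn
  have : 0 < (n.sqrt : ℝ) := by exact_mod_cast Nat.sqrt_pos.2 hn
  have sqrt_sq_le : (n.sqrt : ℝ) ^ 2 ≤ n := by exact_mod_cast n.sqrt_le'
  rw [norm_smul, norm_inv, RCLike.norm_natCast, Function.comp_apply, ← add_div, div_eq_inv_mul]
  gcongr
  exact norm_sum_range_le_sq_subsequence y n

end CesaroAverages

section OrthogonalStrongLaw

variable {Ω : Type*} [MeasurableSpace Ω] {μ : Measure Ω}

lemma ae_tendsto_zero_of_summable_integral_norm {E : Type*} [NormedAddCommGroup E]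
    {f : ℕ → Ω → E} (hf : ∀ k, Integrable (f k) μ) (hsum : Summable fun k => ∫ ω, ‖f k ω‖ ∂μ) :
    ∀ᵐ ω ∂μ, Tendsto (fun k => f k ω) atTop (𝓝 0) := by
  have tsum_ne_top : ∫⁻ ω, ∑' k, ‖f k ω‖ₑ ∂μ ≠ ⊤ := by
    rw [lintegral_tsum fun k => (hf k).1.enorm]
    simp_rw [← ofReal_integral_norm_eq_lintegral_enorm (hf _)]
    exact hsum.tsum_ofReal_ne_top
  filter_upwards [ae_lt_top' (.tsum fun k => (hf k).1.enorm) tsum_ne_top] with ω hω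
  exact tendsto_zero_iff_enorm_tendsto_zero.2 (ENNReal.tendsto_atTop_zero_of_tsum_ne_top hω.ne)

lemma ae_tendsto_div_sq_zero_of_integral_sq_le {X : ℕ → Ω → ℝ} {K : ℝ}
    (hX : ∀ k, MemLp (X k) 2 μ) (hK : ∀ k ≠ 0, ∫ ω, X k ω ^ 2 ∂μ ≤ K * (k : ℝ) ^ 2) :
    ∀ᵐ ω ∂μ, Tendsto (fun k : ℕ => X k ω / (k : ℝ) ^ 2) atTop (𝓝 0) := by
  have integral_le (k : ℕ) : ∫ ω, ‖(X k ω / (k : ℝ) ^ 2) ^ 2‖ ∂μ ≤ K * (1 / (k : ℝ) ^ 2) := by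
    obtain rfl | hk := eq_or_ne k 0
    · simp
    have hk' : (k : ℝ) ≠ 0 := Nat.cast_ne_zero.2 hk
    simp_rw [Real.norm_of_nonneg (sq_nonneg _), div_pow]
    rw [integral_div]
    calc (∫ ω, X k ω ^ 2 ∂μ) / ((k : ℝ) ^ 2) ^ 2 ≤ K * (k : ℝ) ^ 2 / ((k : ℝ) ^ 2) ^ 2 := by
          gcongr
          exact hK k hk
      _ = K * (1 / (k : ℝ) ^ 2) := by field_simp
  have summable_integral : Summable fun k : ℕ => ∫ ω, ‖(X k ω / (k : ℝ) ^ 2) ^ 2‖ ∂μ :=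
    .of_nonneg_of_le (fun k => integral_nonneg fun ω => norm_nonneg _) integral_le
      ((Real.summable_one_div_nat_pow.2 one_lt_two).mul_left K)
  have integrable_sq (k : ℕ) : Integrable (fun ω => (X k ω / (k : ℝ) ^ 2) ^ 2) μ := by
    simp_rw [div_pow]
    exact (hX k).integrable_sq.div_const _
  filter_upwards [ae_tendsto_zero_of_summable_integral_norm integrable_sq summable_integral]
    with ω hω
  have sqrt_tendsto := (Real.continuous_sqrt.tendsto 0).comp hω
  exact tendsto_zero_iff_abs_tendsto_zero _ |>.2 <| by
    simpa [Function.comp_def, Real.sqrt_sq_eq_abs] using sqrt_tendsto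

variable {ι : Type*} {Y : ι → Ω → ℝ}

lemma integral_sum_sq_eq_of_pairwise_orthogonal (hY : ∀ i, MemLp (Y i) 2 μ)
    (horth : Pairwise fun i j => ∫ ω, Y i ω * Y j ω ∂μ = 0) (s : Finset ι) :
    ∫ ω, (∑ i ∈ s, Y i ω) ^ 2 ∂μ = ∑ i ∈ s, ∫ ω, Y i ω ^ 2 ∂μ := by
  have integrable_mul (i j : ι) : Integrable (fun ω => Y i ω * Y j ω) μ :=
    (hY i).integrable_mul (hY j)
  simp_rw [sq, Finset.sum_mul_sum]
  rw [integral_finsetSum _ fun i _ => integrable_finsetSum _ fun j _ => integrable_mul i j]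
  refine Finset.sum_congr rfl fun i hi => ?_
  rw [integral_finsetSum _ fun j _ => integrable_mul i j]
  exact Finset.sum_eq_single_of_mem i hi fun j _ hji => horth hji.symm

lemma integral_sum_abs_sq_le (hY : ∀ i, MemLp (Y i) 2 μ) (s : Finset ι) :
    ∫ ω, (∑ i ∈ s, |Y i ω|) ^ 2 ∂μ ≤ s.card * ∑ i ∈ s, ∫ ω, Y i ω ^ 2 ∂μ := by
  have integrable_sq (i : ι) (_ : i ∈ s) : Integrable (fun ω => Y i ω ^ 2) μ :=
    (hY i).integrable_sq
  rw [← integral_finsetSum _ integrable_sq, ← integral_const_mul]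
  refine integral_mono (memLp_finsetSum s fun i _ => (hY i).abs).integrable_sq
    ((integrable_finsetSum _ integrable_sq).const_mul _) fun ω => ?_
  simpa only [sq_abs] using sq_sum_le_card_mul_sum_sq (s := s) (f := fun i => |Y i ω|)

-- Bounded second moments control both the averages along the squares and the fluctuations between
-- consecutive squares, so no maximal inequality is needed.
theorem ae_tendsto_average_zero_of_pairwise_orthogonal {Y : ℕ → Ω → ℝ} {C : ℝ}
    (hY : ∀ k, MemLp (Y k) 2 μ) (hC : ∀ k, ∫ ω, Y k ω ^ 2 ∂μ ≤ C)
    (horth : Pairwise fun i j => ∫ ω, Y i ω * Y j ω ∂μ = 0) :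
    ∀ᵐ ω ∂μ, Tendsto (fun n : ℕ => (n : ℝ)⁻¹ * ∑ k ∈ Finset.range n, Y k ω) atTop (𝓝 0) := by
  have C_nonneg : 0 ≤ C := (integral_nonneg fun ω => sq_nonneg (Y 0 ω)).trans (hC 0)
  have sum_le (s : Finset ℕ) : ∑ i ∈ s, ∫ ω, Y i ω ^ 2 ∂μ ≤ s.card * C := by
    simpa using Finset.sum_le_card_nsmul s _ C fun i _ => hC i
  have sub_tendsto := ae_tendsto_div_sq_zero_of_integral_sq_le (K := C)
    (X := fun k ω => ∑ i ∈ Finset.range (k ^ 2), Y i ω)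
    (fun k => memLp_finsetSum _ fun i _ => hY i) fun k _ => by
      rw [integral_sum_sq_eq_of_pairwise_orthogonal hY horth]
      refine (sum_le _).trans_eq ?_
      rw [Finset.card_range, Nat.cast_pow, mul_comm]
  have block_tendsto := ae_tendsto_div_sq_zero_of_integral_sq_le (K := 9 * C)
    (X := fun k ω => ∑ i ∈ Finset.Ico (k ^ 2) ((k + 1) ^ 2), |Y i ω|)
    (fun k => memLp_finsetSum _ fun i _ => (hY i).abs) fun k hk => by
      have card_le : ((Finset.Ico (k ^ 2) ((k + 1) ^ 2)).card : ℝ) ≤ 3 * k := by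
        rw [Nat.card_Ico]
        exact_mod_cast Nat.sub_le_iff_le_add.2 (by nlinarith [Nat.pos_of_ne_zero hk])
      calc _ ≤ _ := integral_sum_abs_sq_le hY _
        _ ≤ 3 * k * (3 * k * C) := by
            grw [sum_le]
            gcongr
        _ = 9 * C * (k : ℝ) ^ 2 := by ring
  filter_upwards [sub_tendsto, block_tendsto] with ω hsub hblock
  refine tendsto_average_zero_of_sq_subsequence ?_ hblock
  simpa [abs_div] using hsub.norm

end OrthogonalStrongLaw

section CountablePartition

variable {Ω ι : Type*} [MeasurableSpace Ω] [Countable ι] {h : Ω → ι}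

lemma measurable_of_factorsThrough_of_measurableSet_fiber {β : Type*} [MeasurableSpace β]
    {f : Ω → β} (hh : ∀ i, MeasurableSet (h ⁻¹' {i})) (hf : f.FactorsThrough h) :
    Measurable f := by
  let _ : MeasurableSpace ι := ⊤
  intro B _
  have preimage_eq : f ⁻¹' B = h ⁻¹' (h '' (f ⁻¹' B)) := by
    refine (Set.subset_preimage_image h _).antisymm ?_
    rintro ω ⟨ω', hω', hωω'⟩
    rwa [Set.mem_preimage, ← hf hωω']
  rw [preimage_eq]
  exact measurable_to_countable' hh trivial

lemma integral_mul_eq_zero_of_factorsThrough {μ : Measure Ω} {Z Y : Ω → ℝ}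
    (hh : ∀ i, MeasurableSet (h ⁻¹' {i})) (hZ : Z.FactorsThrough h)
    (hZY : Integrable (fun ω => Z ω * Y ω) μ)
    (hY : ∀ ω₀, ∫ ω in h ⁻¹' {h ω₀}, Y ω ∂μ = 0) :
    ∫ ω, Z ω * Y ω ∂μ = 0 := by
  have setIntegral_eq_zero (i : ι) : ∫ ω in h ⁻¹' {i}, Z ω * Y ω ∂μ = 0 := by
    obtain empty | ⟨ω₀, rfl⟩ := (h ⁻¹' {i}).eq_empty_or_nonempty
    · rw [empty, setIntegral_empty]
    · rw [setIntegral_congr_fun (g := fun ω => Z ω₀ * Y ω) (hh _) fun ω hω => by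
        simp only [hZ (show h ω = h ω₀ from hω)], integral_const_mul, hY, mul_zero]
  have hasSum := hasSum_integral_iUnion hh (pairwise_disjoint_fiber h) hZY.integrableOn
  rw [← Set.preimage_iUnion, Set.iUnion_of_singleton, Set.preimage_univ, setIntegral_univ,
    funext setIntegral_eq_zero] at hasSum
  exact hasSum.unique hasSum_zero

end CountablePartition

lemma tendsto_apply_of_forall_mem_finset {ι α β : Type*} {s : Finset ι} {f : ι → α → β}
    {l : Filter α} {l' : Filter β} (hf : ∀ i ∈ s, Tendsto (f i) l l') {A : α → ι}
    (hA : ∀ x, A x ∈ s) : Tendsto (fun x => f (A x) x) l l' := fun _ hU =>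
  ((eventually_all_finset s).2 fun i hi => hf i hi hU).mono fun x hx => hx (A x) (hA x)

section CayleyTree

lemma eq_of_adj_of_dist_eq_dist_add_one {V : Type*} {T : SimpleGraph V} (hT : T.IsTree)
    {r x y w : V} (hx : T.Adj x w) (hy : T.Adj y w) (hxw : T.dist r w = T.dist r x + 1)
    (hyw : T.dist r w = T.dist r y + 1) : x = y := by
  obtain ⟨px, hpx⟩ := hT.connected.exists_walk_length_eq_dist r x
  obtain ⟨py, hpy⟩ := hT.connected.exists_walk_length_eq_dist r y
  have isPath_x : (px.concat hx).IsPath := SimpleGraph.Walk.isPath_of_length_eq_dist _ <| by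
    rw [SimpleGraph.Walk.length_concat, hpx, hxw]
  have isPath_y : (py.concat hy).IsPath := SimpleGraph.Walk.isPath_of_length_eq_dist _ <| by
    rw [SimpleGraph.Walk.length_concat, hpy, hyw]
  simpa using congrArg SimpleGraph.Walk.penultimate
    ((hT.existsUnique_path r w).unique isPath_x isPath_y)

variable {G : Type*} [Group G] {S : Finset G}

lemma cayleyGraph_adj_mul_left (hS : (1 : G) ∉ S) {s : G} (hs : s ∈ S) (w : G) :
    (cayleyGraph S).Adj w (s * w) := by
  refine ⟨fun h => hS ?_, Or.inl (by simpa using hs)⟩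
  rwa [← right_eq_mul.1 h]

lemma exists_forall_ne_dist_mul_eq_dist_add_one (hS : (1 : G) ∉ S)
    (hT : (cayleyGraph S).IsTree) (hne : S.Nonempty) (r w : G) :
    ∃ a ∈ S, ∀ s ∈ S, s ≠ a →
      (cayleyGraph S).dist r (s * w) = (cayleyGraph S).dist r w + 1 := by
  by_cases hback : ∃ a ∈ S, (cayleyGraph S).dist r w = (cayleyGraph S).dist r (a * w) + 1
  · obtain ⟨a, ha, hdist_a⟩ := hback
    refine ⟨a, ha, fun s hs hsa => ?_⟩
    have adj_s := cayleyGraph_adj_mul_left hS hs w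
    refine (hT.dist_eq_dist_add_one_of_adj r adj_s).resolve_left fun hdist_s => hsa ?_
    exact mul_right_cancel (eq_of_adj_of_dist_eq_dist_add_one hT adj_s.symm
      (cayleyGraph_adj_mul_left hS ha w).symm hdist_s hdist_a)
  · push Not at hback
    obtain ⟨a, ha⟩ := hne
    exact ⟨a, ha, fun s hs _ => (hT.dist_eq_dist_add_one_of_adj r
      (cayleyGraph_adj_mul_left hS hs w)).resolve_left (hback s hs)⟩

end CayleyTree

/-- The coefficient `α` for which the conditional probability of an `a`-step after `n ≥ 1` steps is
the affine combination `α * (N n a / n) + (1 - α) * (1 / d)` of the past frequency of `a` and the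
uniform probability. -/
def memoryCoeff (p : ℝ) (d : ℕ) : ℝ := (d * p - 1) / (d - 1)

lemma abs_memoryCoeff_lt_one {p : ℝ} {d : ℕ} (hd : 3 ≤ d) (hp0 : 0 ≤ p) (hp1 : p < 1) :
    |memoryCoeff p d| < 1 := by
  have hd' : (3 : ℝ) ≤ d := by exact_mod_cast hd
  have hd1 : (0 : ℝ) < d - 1 := by linarith
  rw [memoryCoeff, abs_lt, lt_div_iff₀ hd1, div_lt_iff₀ hd1]
  constructor <;> nlinarith

namespace ERW

variable {G : Type*} [Group G] [DecidableEq G] {d : ℕ} {p : ℝ}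
  {Ω : Type*} [MeasurableSpace Ω] {P : Measure Ω} (E : ERW G d p Ω P)

section History

/-- The first `n` steps, valued in a finite type, so that the events determined by the past up to
time `n` are the finite unions of fibres of `E.hist n`. -/
def hist (n : ℕ) (ω : Ω) : Finset.Icc 1 n → E.S :=
  fun k => ⟨E.g k ω, E.mem_S k (Finset.mem_Icc.1 k.2).1 ω⟩

lemma hist_eq_hist_iff {n : ℕ} {ω ω' : Ω} :
    E.hist n ω = E.hist n ω' ↔ ∀ k ∈ Finset.Icc 1 n, E.g k ω = E.g k ω' := by
  simp only [funext_iff, hist, Subtype.forall, Subtype.mk.injEq]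

lemma factorsThrough_hist_mono {α : Type*} {f : Ω → α} {m n : ℕ} (hmn : m ≤ n)
    (hf : f.FactorsThrough (E.hist m)) : f.FactorsThrough (E.hist n) := fun _ _ h =>
  hf <| E.hist_eq_hist_iff.2 fun k hk =>
    E.hist_eq_hist_iff.1 h k (Finset.Icc_subset_Icc_right hmn hk)

lemma measurableSet_hist_fiber (n : ℕ) (t : Finset.Icc 1 n → E.S) :
    MeasurableSet (E.hist n ⁻¹' {t}) := by
  have fiber_eq : E.hist n ⁻¹' {t} = ⋂ k : Finset.Icc 1 n, {ω | E.g k ω = t k} := by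
    ext ω
    simp only [Set.mem_preimage, Set.mem_singleton_iff, Set.mem_iInter, Set.mem_ofPred_eq,
      funext_iff, hist, Subtype.ext_iff]
  rw [fiber_eq]
  exact .iInter fun k => E.meas_g _ _

lemma g_succ_factorsThrough_hist (n : ℕ) : (E.g (n + 1)).FactorsThrough (E.hist (n + 1)) :=
  fun _ _ h => E.hist_eq_hist_iff.1 h (n + 1) (by simp)

lemma count_factorsThrough_hist (a : G) (n : ℕ) : (E.count a n).FactorsThrough (E.hist n) := by
  intro ω ω' h
  exact congrArg Finset.card (Finset.filter_congr fun k hk => by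
    rw [E.hist_eq_hist_iff.1 h k hk])

lemma pos_factorsThrough_hist (n : ℕ) : (E.pos n).FactorsThrough (E.hist n) := by
  induction n with
  | zero => exact fun _ _ _ => rfl
  | succ n ih =>
    intro ω ω' h
    simp only [pos, E.g_succ_factorsThrough_hist n h, E.factorsThrough_hist_mono n.le_succ ih h]

end History

section StepFrequencies

/-- The conditional probability of `g (n + 1) = a` given the first `n ≥ 1` steps; at `n = 0` it
takes the junk value `0`. -/
def stepProb (a : G) (n : ℕ) (ω : Ω) : ℝ :=
  p * ((E.count a n ω : ℝ) / n)
    + (1 - p) / ((d : ℝ) - 1) * (((n : ℝ) - (E.count a n ω : ℝ)) / n)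

/-- A choice of one step at each time that depends only on the past. -/
structure IsPredictable (A : ℕ → Ω → G) : Prop where
  mem : ∀ n ω, A n ω ∈ E.S
  factorsThrough_hist : ∀ n, (A n).FactorsThrough (E.hist n)

/-- The indicator that step `n + 1` is the one chosen by `A`. -/
def hit (A : ℕ → Ω → G) (n : ℕ) (ω : Ω) : ℝ := if E.g (n + 1) ω = A n ω then 1 else 0

/-- The indicator `E.hit A n` minus its conditional probability given the first `n` steps: a
martingale difference when `A` is predictable and `n ≥ 1`. -/
def innovation (A : ℕ → Ω → G) (n : ℕ) (ω : Ω) : ℝ := E.hit A n ω - E.stepProb (A n ω) n ω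

lemma count_le (a : G) (n : ℕ) (ω : Ω) : E.count a n ω ≤ n :=
  (Finset.card_filter_le _ _).trans (by simp)

lemma count_div_mem_Icc (a : G) (n : ℕ) (ω : Ω) : (E.count a n ω : ℝ) / n ∈ Set.Icc 0 1 :=
  ⟨by positivity, div_le_one_of_le₀ (by exact_mod_cast E.count_le a n ω) (by positivity)⟩

lemma count_eq_sum_hit (a : G) (n : ℕ) (ω : Ω) :
    (E.count a n ω : ℝ) = ∑ k ∈ Finset.range n, E.hit (fun _ _ => a) k ω := by
  rw [count, Finset.card_filter, Nat.cast_sum, Finset.range_eq_Ico]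
  simp only [hit, Nat.cast_ite, Nat.cast_one, Nat.cast_zero]
  exact (Finset.sum_Ico_add' (fun k => if E.g k ω = a then (1 : ℝ) else 0) 0 n 1).symm

lemma stepProb_eq (hd : 2 ≤ d) (a : G) {n : ℕ} (hn : n ≠ 0) (ω : Ω) :
    E.stepProb a n ω = memoryCoeff p d * ((E.count a n ω : ℝ) / n)
      + (1 - memoryCoeff p d) * (1 / d) := by
  have hd' : (2 : ℝ) ≤ d := by exact_mod_cast hd
  have hd1 : (d : ℝ) - 1 ≠ 0 := by linarith
  have hn' : (n : ℝ) ≠ 0 := Nat.cast_ne_zero.2 hn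
  rw [stepProb, memoryCoeff]
  field_simp
  ring

lemma stepProb_mem_Icc (hd : 2 ≤ d) (hp0 : 0 ≤ p) (hp1 : p ≤ 1) (a : G) (n : ℕ) (ω : Ω) :
    E.stepProb a n ω ∈ Set.Icc 0 1 := by
  have hd' : (2 : ℝ) ≤ d := by exact_mod_cast hd
  obtain rfl | hn := eq_or_ne n 0
  · simp [stepProb]
  obtain ⟨freq_nonneg, freq_le_one⟩ := E.count_div_mem_Icc a n ω
  have coeff_nonneg : 0 ≤ (1 - p) / ((d : ℝ) - 1) := div_nonneg (by linarith) (by linarith)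
  have coeff_le : (1 - p) / ((d : ℝ) - 1) ≤ 1 - p :=
    div_le_self (by linarith) (by linarith)
  rw [stepProb, sub_div (n : ℝ), div_self (Nat.cast_ne_zero.2 hn)]
  constructor <;> nlinarith

lemma abs_innovation_le_one (hd : 2 ≤ d) (hp0 : 0 ≤ p) (hp1 : p ≤ 1) (A : ℕ → Ω → G) (n : ℕ)
    (ω : Ω) : |E.innovation A n ω| ≤ 1 := by
  obtain ⟨prob_nonneg, prob_le_one⟩ := E.stepProb_mem_Icc hd hp0 hp1 (A n ω) n ω
  rw [innovation, hit, abs_le]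
  split_ifs <;> constructor <;> linarith

variable {E} {A : ℕ → Ω → G}

lemma IsPredictable.innovation_factorsThrough_hist (hA : E.IsPredictable A) (n : ℕ) :
    (E.innovation A n).FactorsThrough (E.hist (n + 1)) := by
  intro ω ω' h
  have step_eq := E.g_succ_factorsThrough_hist n h
  have choice_eq := E.factorsThrough_hist_mono n.le_succ (hA.factorsThrough_hist n) h
  have count_eq (a : G) := E.factorsThrough_hist_mono n.le_succ (E.count_factorsThrough_hist a n) h
  simp only [innovation, hit, stepProb, step_eq, choice_eq, count_eq]

lemma IsPredictable.measurable_innovation (hA : E.IsPredictable A) (n : ℕ) :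
    Measurable (E.innovation A n) :=
  measurable_of_factorsThrough_of_measurableSet_fiber (E.measurableSet_hist_fiber (n + 1))
    (hA.innovation_factorsThrough_hist n)

lemma IsPredictable.setIntegral_innovation_eq_zero [IsFiniteMeasure P] (hA : E.IsPredictable A)
    {n : ℕ} (hn : 1 ≤ n) (ω₀ : Ω) :
    ∫ ω in E.hist n ⁻¹' {E.hist n ω₀}, E.innovation A n ω ∂P = 0 := by
  set a := A n ω₀
  set next : Set Ω := {ω | E.g (n + 1) ω = a}
  have next_meas : MeasurableSet next := E.meas_g _ _
  have innovation_eq : Set.EqOn (E.innovation A n)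
      (fun ω => next.indicator 1 ω - E.stepProb a n ω₀) (E.hist n ⁻¹' {E.hist n ω₀}) := by
    intro ω hω
    have choice_eq : A n ω = a := hA.factorsThrough_hist n hω
    simp only [innovation, hit, stepProb, choice_eq, E.count_factorsThrough_hist a n hω,
      Set.indicator_apply, Pi.one_apply, next, Set.mem_ofPred_eq]
  have update_eq : P.real (E.hist n ⁻¹' {E.hist n ω₀} ∩ next)
      = E.stepProb a n ω₀ * P.real (E.hist n ⁻¹' {E.hist n ω₀}) := by
    have fiber_eq : E.hist n ⁻¹' {E.hist n ω₀} = {ω | ∀ k ∈ Finset.Icc 1 n, E.g k ω = E.g k ω₀} :=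
      Set.ext fun ω => E.hist_eq_hist_iff
    rw [fiber_eq]
    exact E.update n hn (fun k => E.g k ω₀) a (hA.mem n ω₀)
  rw [setIntegral_congr_fun (E.measurableSet_hist_fiber n _) innovation_eq,
    integral_sub ((integrable_const _).indicator next_meas) (integrable_const _),
    integral_indicator_one next_meas, setIntegral_const, smul_eq_mul,
    measureReal_restrict_apply next_meas, Set.inter_comm, update_eq]
  ring

theorem IsPredictable.ae_tendsto_average_innovation [IsProbabilityMeasure P] (hd : 2 ≤ d)
    (hp0 : 0 ≤ p) (hp1 : p ≤ 1) (hA : E.IsPredictable A) :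
    ∀ᵐ ω ∂P, Tendsto (fun n : ℕ => (n : ℝ)⁻¹ * ∑ k ∈ Finset.range n, E.innovation A k ω)
      atTop (𝓝 0) := by
  have abs_le := E.abs_innovation_le_one hd hp0 hp1 A
  have memLp (k : ℕ) : MemLp (E.innovation A k) 2 P :=
    .of_bound (hA.measurable_innovation k).aestronglyMeasurable 1 (ae_of_all _ (abs_le k))
  have integral_sq_le (k : ℕ) : ∫ ω, E.innovation A k ω ^ 2 ∂P ≤ 1 := by
    simpa using integral_mono (memLp k).integrable_sq (integrable_const 1) fun ω =>
      (sq_le_one_iff_abs_le_one _).2 (abs_le k ω)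
  have orthogonal_of_lt {i j : ℕ} (hij : i < j) :
      ∫ ω, E.innovation A i ω * E.innovation A j ω ∂P = 0 :=
    integral_mul_eq_zero_of_factorsThrough (E.measurableSet_hist_fiber j)
      (E.factorsThrough_hist_mono hij (hA.innovation_factorsThrough_hist i))
      ((memLp i).integrable_mul (memLp j)) (hA.setIntegral_innovation_eq_zero (by omega))
  refine ae_tendsto_average_zero_of_pairwise_orthogonal memLp integral_sq_le fun i j hij => ?_
  obtain hlt | hgt := hij.lt_or_gt
  · exact orthogonal_of_lt hlt
  · simpa only [mul_comm] using orthogonal_of_lt hgt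

variable (E)

theorem ae_tendsto_count_div [IsProbabilityMeasure P] (hd : 3 ≤ d) (hp0 : 0 ≤ p) (hp1 : p < 1)
    {a : G} (ha : a ∈ E.S) :
    ∀ᵐ ω ∂P, Tendsto (fun n : ℕ => (E.count a n ω : ℝ) / n) atTop (𝓝 (1 / d)) := by
  have hd2 : 2 ≤ d := by omega
  have const_predictable : E.IsPredictable fun _ _ => a := ⟨fun _ _ => ha, fun _ _ _ _ => rfl⟩
  filter_upwards [const_predictable.ae_tendsto_average_innovation hd2 hp0 hp1.le] with ω hω
  have intercept_tendsto : Tendsto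
      (fun n : ℕ => E.stepProb a n ω - memoryCoeff p d * ((E.count a n ω : ℝ) / n)) atTop
      (𝓝 ((1 - memoryCoeff p d) * (1 / d))) :=
    tendsto_const_nhds.congr' <| (eventually_ne_atTop 0).mono fun n hn => by
      simp only [E.stepProb_eq hd2 a hn, add_sub_cancel_left]
  have freq_le_one (n : ℕ) : ‖(E.count a n ω : ℝ) / n‖ ≤ 1 := by
    rw [Real.norm_of_nonneg (E.count_div_mem_Icc a n ω).1]
    exact (E.count_div_mem_Icc a n ω).2
  refine tendsto_of_sub_smul_average_tendsto (abs_memoryCoeff_lt_one hd hp0 hp1) freq_le_one ?_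
  convert hω.add intercept_tendsto.cesaro using 2 with n
  · simp only [E.count_eq_sum_hit a n, innovation, Finset.sum_sub_distrib, ← Finset.mul_sum,
      smul_eq_mul]
    ring
  · rw [smul_eq_mul, zero_add]

lemma tendsto_stepProb (hd : 2 ≤ d) {a : G} {ω : Ω}
    (hfreq : Tendsto (fun n : ℕ => (E.count a n ω : ℝ) / n) atTop (𝓝 (1 / d))) :
    Tendsto (fun n => E.stepProb a n ω) atTop (𝓝 (1 / d)) := by
  have affine_tendsto := (hfreq.const_mul (memoryCoeff p d)).add_const
    ((1 - memoryCoeff p d) * (1 / d))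
  rw [← add_mul, add_sub_cancel, one_mul] at affine_tendsto
  exact affine_tendsto.congr' <| (eventually_ne_atTop 0).mono fun n hn =>
    (E.stepProb_eq hd a hn ω).symm

variable {E}

theorem IsPredictable.ae_tendsto_average_hit [IsProbabilityMeasure P] (hd : 3 ≤ d)
    (hp0 : 0 ≤ p) (hp1 : p < 1) (hA : E.IsPredictable A) :
    ∀ᵐ ω ∂P, Tendsto (fun n : ℕ => (n : ℝ)⁻¹ * ∑ k ∈ Finset.range n, E.hit A k ω)
      atTop (𝓝 (1 / d)) := by
  have hd2 : 2 ≤ d := by omega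
  have freq_tendsto := (ae_ball_iff E.S.countable_toSet).2 fun a ha =>
    E.ae_tendsto_count_div hd hp0 hp1 ha
  filter_upwards [hA.ae_tendsto_average_innovation hd2 hp0 hp1.le, freq_tendsto]
    with ω hinnov hfreq
  have prob_tendsto : Tendsto (fun n => E.stepProb (A n ω) n ω) atTop (𝓝 (1 / d)) :=
    tendsto_apply_of_forall_mem_finset (f := fun a n => E.stepProb a n ω)
      (fun a ha => E.tendsto_stepProb hd2 (hfreq a ha)) fun n => hA.mem n ω
  simpa [innovation, mul_sub] using hinnov.add prob_tendsto.cesaro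

end StepFrequencies

section Distance

lemma isPredictable_comp_pos {γ : G → G} (hγ : ∀ w, γ w ∈ E.S) :
    E.IsPredictable fun n ω => γ (E.pos n ω) :=
  ⟨fun _ _ => hγ _, fun n => (E.pos_factorsThrough_hist n).comp_left γ⟩

lemma dist_succ_eq_or (n : ℕ) (ω : Ω) :
    E.dist n ω = E.dist (n + 1) ω + 1 ∨ E.dist (n + 1) ω = E.dist n ω + 1 :=
  E.tree.dist_eq_dist_add_one_of_adj 1
    (cayleyGraph_adj_mul_left E.one_not_mem (E.mem_S (n + 1) n.succ_pos ω) (E.pos n ω))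

lemma dist_zero (ω : Ω) : E.dist 0 ω = 0 := SimpleGraph.dist_self

lemma dist_le (n : ℕ) (ω : Ω) : E.dist n ω ≤ n := by
  induction n with
  | zero => exact (E.dist_zero ω).le
  | succ n ih => have := E.dist_succ_eq_or n ω; omega

lemma sub_two_mul_sum_hit_le_dist {γ : G → G}
    (hγ : ∀ w, ∀ s ∈ E.S, s ≠ γ w →
      (cayleyGraph E.S).dist 1 (s * w) = (cayleyGraph E.S).dist 1 w + 1) (n : ℕ) (ω : Ω) :
    n - 2 * ∑ k ∈ Finset.range n, E.hit (fun n ω => γ (E.pos n ω)) k ω ≤ E.dist n ω := by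
  induction n with
  | zero => simp
  | succ n ih =>
    have increment_ge : (E.dist n ω : ℝ) + 1 - 2 * E.hit (fun n ω => γ (E.pos n ω)) n ω
        ≤ E.dist (n + 1) ω := by
      rw [hit]
      split_ifs with hback
      · have : (E.dist n ω : ℝ) ≤ E.dist (n + 1) ω + 1 := by
          exact_mod_cast (by have := E.dist_succ_eq_or n ω; omega)
        linarith
      · have dist_succ : E.dist (n + 1) ω = E.dist n ω + 1 :=
          hγ (E.pos n ω) _ (E.mem_S (n + 1) n.succ_pos ω) hback
        rw [dist_succ]
        push_cast
        linarith
    rw [Finset.sum_range_succ]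
    push_cast
    linarith

lemma isBoundedUnder_le_dist_div (ω : Ω) :
    IsBoundedUnder (· ≤ ·) atTop fun n : ℕ => (E.dist n ω : ℝ) / n :=
  isBoundedUnder_of ⟨1, fun n =>
    div_le_one_of_le₀ (by exact_mod_cast E.dist_le n ω) (by positivity)⟩

theorem ae_le_liminf_dist_div [IsProbabilityMeasure P] (hd : 3 ≤ d) (hp0 : 0 ≤ p) (hp1 : p < 1) :
    ∀ᵐ ω ∂P, 1 - 2 / (d : ℝ) ≤ liminf (fun n : ℕ => (E.dist n ω : ℝ) / n) atTop := by
  have S_nonempty : E.S.Nonempty := Finset.card_pos.1 (by rw [E.card_S]; omega)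
  choose γ hγ_mem hγ using
    exists_forall_ne_dist_mul_eq_dist_add_one E.one_not_mem E.tree S_nonempty 1
  filter_upwards [(E.isPredictable_comp_pos hγ_mem).ae_tendsto_average_hit hd hp0 hp1] with ω hω
  have lower_tendsto := (hω.const_mul 2).const_sub 1
  rw [mul_one_div] at lower_tendsto
  rw [← lower_tendsto.liminf_eq]
  refine liminf_le_liminf ?_ lower_tendsto.isBoundedUnder_ge
    (E.isBoundedUnder_le_dist_div ω).isCoboundedUnder_ge
  filter_upwards [eventually_gt_atTop 0] with n hn
  have hn' : (0 : ℝ) < n := Nat.cast_pos.2 hn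
  rw [le_div_iff₀ hn']
  refine le_of_eq_of_le ?_ (E.sub_two_mul_sum_hit_le_dist hγ n ω)
  field_simp

lemma finite_setOf_dist_eq_zero_of_liminf_pos {ω : Ω}
    (hpos : 0 < liminf (fun n : ℕ => (E.dist n ω : ℝ) / n) atTop) :
    {n : ℕ | E.dist n ω = 0}.Finite := by
  have dist_div_pos := eventually_lt_of_lt_liminf hpos
    (isBoundedUnder_of ⟨0, fun n => by positivity⟩)
  rw [← Nat.cofinite_eq_atTop, eventually_cofinite] at dist_div_pos
  exact dist_div_pos.subset fun n (hn : E.dist n ω = 0) => by simp [hn]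

end Distance

end ERW

/-- almost surely `liminf Δ n / n ≥ 1 - 2/d > 0`; in particular the
walk almost surely returns to the root only finitely often. -/
theorem erw_liminf_speed_and_finitely_many_returns
    {G : Type*} [Group G] [DecidableEq G] {Ω : Type*} [MeasurableSpace Ω]
    {P : Measure Ω} [IsProbabilityMeasure P]
    (d : ℕ) (hd : 3 ≤ d) (p : ℝ) (hp0 : 0 ≤ p) (hp1 : p < 1)
    (E : ERW G d p Ω P) :
    0 < 1 - 2 / (d : ℝ) ∧
    ∀ᵐ ω ∂P,
      (1 - 2 / (d : ℝ) ≤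
        Filter.liminf (fun n : ℕ => (E.dist n ω : ℝ) / n) atTop) ∧
      {n : ℕ | 1 ≤ n ∧ E.dist n ω = 0}.Finite := by
  have speed_pos : 0 < 1 - 2 / (d : ℝ) := by
    rw [sub_pos, div_lt_one (by positivity)]
    exact_mod_cast hd
  refine ⟨speed_pos, ?_⟩
  filter_upwards [E.ae_le_liminf_dist_div hd hp0 hp1] with ω hω
  exact ⟨hω, (E.finite_setOf_dist_eq_zero_of_liminf_pos (speed_pos.trans_le hω)).subset
    fun n hn => hn.2⟩

end
end

section
/- Let Γ = Z^{*d} be the free group of rank d ≥ 2 with its standard symmetric generating set of 2d elements, and consider the elephant random walk on Cay(Γ; S) (whose Cayley graph is the 2d-regular tree) with memory parameter p ∈ [0, 1). Then the word-metric distance Δ_n of the walk from the identity dominates the ℓ¹-norm of the multi-dimensional elephant random walk S_n on Z^d obtained by abelianization of the same step sequence, i.e. ‖S_n‖₁ ≤ Δ_n for all n; consequently there exists C > 0 such that P(Δ_n = 0) ≤ C · n^{−d/2} for all n ≥ 1. -/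
open MeasureTheory ProbabilityTheory Filter

noncomputable section

/-- The standard symmetric generating set `{a₁, a₁⁻¹, …, a_d, a_d⁻¹}` of the free
group of rank `d`. -/
def freeGroupGens (d : ℕ) : Finset (FreeGroup (Fin d)) :=
  (Finset.univ.image fun i => FreeGroup.of i) ∪
    (Finset.univ.image fun i => (FreeGroup.of i)⁻¹)

/-- The abelianization map `FreeGroup (Fin d) →* Multiplicative (Fin d → ℤ)`, sending
the generator `a_i` to `e_i` (and hence `a_i⁻¹` to `-e_i`). -/
def freeGroupAbelianize (d : ℕ) :
    FreeGroup (Fin d) →* Multiplicative (Fin d → ℤ) :=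
  FreeGroup.lift fun i => Multiplicative.ofAdd (Pi.single i (1 : ℤ))

/-!
The abelianization changes by one unit vector along every edge of the Cayley graph, so it is
`1`-Lipschitz from the word metric to the `ℓ¹`-norm, and a return of the walk to the identity
forces `S n = 0`.  By Fourier inversion `P (S n = 0)` is the average over `θ` in the dual torus of
`𝔼 exp (i ⟨θ, S n⟩)`.  A bound `c * exp (-t n ∑ sin² θ_j)` on this characteristic function yields
the rate `n ^ (-d/2)`, by comparison with a Gaussian integral in each coordinate.

The characteristic function is a mixed moment of the steps, with the same character `χ` as test
function at every step.  Averaging over the last step deletes its factor and multiplies the factor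
of a uniformly chosen earlier step by a conditional mean `K χ`, and `‖K χ‖ ≤ r = 1 - O(∑ sin² θ_j)`.
Integrate out the last `n / 2` steps in this way.  A step gains `r` unless its factor was altered
by a later one, and every choice of a step in the first half, which has probability at least `1/2`,
alters nothing that is still to be integrated.  Hence each of the `n / 2` steps gains
`(1 + r) / 2` on average.
-/

section MemoryMoment

variable {A V : Type*} [NonUnitalSeminormedRing A] [SeminormedAddCommGroup V] [NormedSpace ℝ V]

/-- The recursion obeyed by the mixed moments `F n h = 𝔼[h 0 (X 0) ⋯ h (n - 1) (X (n - 1))]` of a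
process each of whose steps recalls a uniformly chosen earlier one: `K` sends a test function to
its conditional mean over the next step given the recalled step.  Test functions are
elements of an arbitrary normed ring. -/
structure IsMemoryMoment (K : A → A) (F : ℕ → (ℕ → A) → V) : Prop where
  norm_le : ∀ n h, ‖F n h‖ ≤ ∏ i ∈ Finset.range n, ‖h i‖
  succ : ∀ n h, n ≠ 0 → F (n + 1) h =
    (n : ℝ)⁻¹ • ∑ D ∈ Finset.range n, F n (Function.update h D (h D * K (h n)))

theorem prod_norm_update_mul_le {ι : Type*} [DecidableEq ι] {s : Finset ι} {D : ι} (hD : D ∈ s)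
    (h : ι → A) (a : A) :
    ∏ i ∈ s, ‖Function.update h D (h D * a) i‖ ≤ ‖a‖ * ∏ i ∈ s, ‖h i‖ := by
  simp_rw [Function.apply_update (fun _ : ι => (norm : A → ℝ))]
  rw [Finset.prod_update_of_mem hD, ← Finset.mul_prod_erase s _ hD, Finset.sdiff_singleton_eq_erase,
    ← mul_assoc, mul_comm ‖a‖]
  gcongr
  exact norm_mul_le _ _

theorem sum_range_ite_lt_le {m j : ℕ} (hjm : j ≤ m) {r : ℝ} (hr : r ≤ 1) :
    ∑ D ∈ Finset.range (m + j), (if D < m then r else 1) ≤ ((m + j : ℕ) : ℝ) * ((1 + r) / 2) := by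
  have early : ∑ D ∈ Finset.range m, (if D < m then r else 1) = m * r := by
    rw [Finset.sum_congr rfl fun D hD => if_pos (Finset.mem_range.1 hD)]
    simp
  have hjm' : (j : ℝ) ≤ m := by exact_mod_cast hjm
  rw [Finset.sum_range_add, early]
  simp only [Nat.not_lt_of_le (Nat.le_add_right m _), if_false, Finset.sum_const,
    Finset.card_range, nsmul_eq_mul, mul_one]
  push_cast
  nlinarith

/-- The late indices (those at least `m`) whose test function is no longer the original one after
step `k` has recalled step `D` and been integrated out, if `U` were the late indices modified
before.  Early indices are not tracked. -/
def recalledSet (m k D : ℕ) (U : Finset ℕ) : Finset ℕ :=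
  if D < m then U.erase k else insert D (U.erase k)

theorem update_eq_of_notMem_recalledSet {α : Type*} {m j D : ℕ} {U : Finset ℕ} {h : ℕ → α} {e : α}
    (hU : ∀ i ∈ Finset.Ico m (m + (j + 1)), i ∉ U → h i = e) (b : α) :
    ∀ i ∈ Finset.Ico m (m + j), i ∉ recalledSet m (m + j) D U → Function.update h D b i = e := by
  intro i hi hiW
  have hiDU : i ≠ D ∧ i ∉ U := by
    unfold recalledSet at hiW
    split_ifs at hiW <;> grind
  rw [Function.update_of_ne hiDU.1]
  exact hU i (by grind) hiDU.2

variable {K : A → A} {e : A} {r : ℝ}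

theorem norm_mul_inv_pow_card_erase_le (hK : ∀ a, ‖K a‖ ≤ ‖a‖) (hr : 0 < r)
    (he : ‖K e‖ ≤ r * ‖e‖) {a : A} {k : ℕ} {U : Finset ℕ} (ha : k ∉ U → a = e) :
    ‖K a‖ * r⁻¹ ^ (U.erase k).card ≤ r * r⁻¹ ^ U.card * ‖a‖ := by
  by_cases hk : k ∈ U
  · have hpow : r * r⁻¹ ^ U.card = r⁻¹ ^ (U.erase k).card := by
      rw [← Finset.card_erase_add_one hk, pow_succ']
      field_simp
    rw [hpow, mul_comm]
    gcongr
    exact hK a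
  · obtain rfl := ha hk
    rw [Finset.erase_eq_of_notMem hk, mul_right_comm]
    gcongr

theorem inv_pow_card_recalledSet_le (hr0 : 0 < r) (hr1 : r ≤ 1) (m k D : ℕ) (U : Finset ℕ) :
    r⁻¹ ^ (recalledSet m k D U).card ≤
      (if D < m then 1 else r⁻¹) * r⁻¹ ^ (U.erase k).card := by
  unfold recalledSet
  split_ifs
  · rw [one_mul]
  · rw [← pow_succ']
    exact pow_le_pow_right₀ ((one_le_inv₀ hr0).2 hr1) (Finset.card_insert_le _ _)

theorem norm_mul_inv_pow_card_recalledSet_le (hK : ∀ a, ‖K a‖ ≤ ‖a‖) (hr0 : 0 < r) (hr1 : r ≤ 1)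
    (he : ‖K e‖ ≤ r * ‖e‖) {a : A} {k : ℕ} {U : Finset ℕ} (ha : k ∉ U → a = e) (m D : ℕ) :
    ‖K a‖ * r⁻¹ ^ (recalledSet m k D U).card ≤
      (if D < m then r else 1) * (r⁻¹ ^ U.card * ‖a‖) := by
  calc ‖K a‖ * r⁻¹ ^ (recalledSet m k D U).card
      ≤ ‖K a‖ * ((if D < m then 1 else r⁻¹) * r⁻¹ ^ (U.erase k).card) := by
        gcongr
        exact inv_pow_card_recalledSet_le hr0 hr1 m k D U
    _ = (if D < m then 1 else r⁻¹) * (‖K a‖ * r⁻¹ ^ (U.erase k).card) := by ring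
    _ ≤ (if D < m then 1 else r⁻¹) * (r * r⁻¹ ^ U.card * ‖a‖) := by
        gcongr ?_ * ?_
        exact norm_mul_inv_pow_card_erase_le hK hr0 he ha
    _ = (if D < m then r else 1) * (r⁻¹ ^ U.card * ‖a‖) := by
        split_ifs
        · ring
        · field_simp

theorem inv_pow_card_recalledSet_mul_prod_norm_le (hK : ∀ a, ‖K a‖ ≤ ‖a‖) (hr0 : 0 < r)
    (hr1 : r ≤ 1) (he : ‖K e‖ ≤ r * ‖e‖) {k D : ℕ} {U : Finset ℕ} {h : ℕ → A}
    (hk : k ∉ U → h k = e) (hD : D ∈ Finset.range k) (m : ℕ) :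
    r⁻¹ ^ (recalledSet m k D U).card *
        ∏ i ∈ Finset.range k, ‖Function.update h D (h D * K (h k)) i‖ ≤
      (if D < m then r else 1) * (r⁻¹ ^ U.card * ∏ i ∈ Finset.range (k + 1), ‖h i‖) := by
  calc _ ≤ r⁻¹ ^ (recalledSet m k D U).card * (‖K (h k)‖ * ∏ i ∈ Finset.range k, ‖h i‖) := by
        gcongr
        exact prod_norm_update_mul_le hD h _
    _ = ‖K (h k)‖ * r⁻¹ ^ (recalledSet m k D U).card * ∏ i ∈ Finset.range k, ‖h i‖ := by ring
    _ ≤ (if D < m then r else 1) * (r⁻¹ ^ U.card * ‖h k‖) * ∏ i ∈ Finset.range k, ‖h i‖ := by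
        gcongr ?_ * _
        exact norm_mul_inv_pow_card_recalledSet_le hK hr0 hr1 he hk m D
    _ = _ := by rw [Finset.prod_range_succ]; ring

namespace IsMemoryMoment

variable {F : ℕ → (ℕ → A) → V}

-- The weight `r⁻¹ ^ #U` repays the gains `r` that the altered steps `U` no longer provide; the
-- hypothesis `j ≤ m` makes the recalled step early, and so free of charge, half of the time.
theorem norm_le_of_eq_off (hF : IsMemoryMoment K F) (hK : ∀ a, ‖K a‖ ≤ ‖a‖) (hr0 : 0 < r)
    (hr1 : r ≤ 1) (he : ‖K e‖ ≤ r * ‖e‖) {m j : ℕ} (hjm : j ≤ m) (U : Finset ℕ) (h : ℕ → A)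
    (hU : ∀ i ∈ Finset.Ico m (m + j), i ∉ U → h i = e) :
    ‖F (m + j) h‖ ≤
      ((1 + r) / 2) ^ j * r⁻¹ ^ U.card * ∏ i ∈ Finset.range (m + j), ‖h i‖ := by
  induction j generalizing U h with
  | zero =>
    refine (hF.norm_le m h).trans ?_
    rw [pow_zero, one_mul]
    exact le_mul_of_one_le_left (by positivity) (one_le_pow₀ ((one_le_inv₀ hr0).2 hr1))
  | succ j ih =>
    set k := m + j with hk
    set B := ((1 + r) / 2) ^ j * (r⁻¹ ^ U.card * ∏ i ∈ Finset.range (k + 1), ‖h i‖) with hB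
    have norm_recall_le : ∀ D ∈ Finset.range k,
        ‖F k (Function.update h D (h D * K (h k)))‖ ≤ (if D < m then r else 1) * B := by
      intro D hD
      refine (ih (by omega) (recalledSet m k D U) _ (update_eq_of_notMem_recalledSet hU _)).trans ?_
      rw [mul_assoc, hB, mul_left_comm (if D < m then r else 1)]
      gcongr _ * ?_
      exact inv_pow_card_recalledSet_mul_prod_norm_le hK hr0 hr1 he (hU k (by simp [hk])) hD m
    have hk0 : (k : ℝ) ≠ 0 := by exact_mod_cast (by omega : k ≠ 0)
    calc ‖F (m + (j + 1)) h‖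
        = (k : ℝ)⁻¹ * ‖∑ D ∈ Finset.range k, F k (Function.update h D (h D * K (h k)))‖ := by
          rw [← add_assoc, hF.succ k h (by omega), norm_smul, norm_inv, Real.norm_natCast]
      _ ≤ (k : ℝ)⁻¹ * ((∑ D ∈ Finset.range k, if D < m then r else 1) * B) := by
          rw [Finset.sum_mul]
          gcongr
          exact norm_sum_le_of_le _ norm_recall_le
      _ ≤ (k : ℝ)⁻¹ * (k * ((1 + r) / 2) * B) := by
          gcongr
          exact sum_range_ite_lt_le (by omega) hr1
      _ = (1 + r) / 2 * B := by field_simp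
      _ = _ := by rw [hB, pow_succ', ← add_assoc]; ring

theorem norm_const_le (hF : IsMemoryMoment K F) (hK : ∀ a, ‖K a‖ ≤ ‖a‖) (hr0 : 0 < r)
    (hr1 : r ≤ 1) (he : ‖K e‖ ≤ r * ‖e‖) (n : ℕ) :
    ‖F n fun _ => e‖ ≤ ((1 + r) / 2) ^ (n / 2) * ‖e‖ ^ n := by
  have h := hF.norm_le_of_eq_off hK hr0 hr1 he (m := n - n / 2) (j := n / 2) (by omega) ∅
    (fun _ => e) fun _ _ _ => rfl
  simpa [Nat.sub_add_cancel (Nat.div_le_self n 2)] using h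

end IsMemoryMoment

end MemoryMoment

section LatticeFourier

variable {ι : Type*} [Fintype ι]

/-- The character `v ↦ exp (i ⟨θ, v⟩)` of `ℤ^ι`, written multiplicatively to compose with
homomorphisms out of non-commutative groups. -/
def latticeChar (θ : ι → ℝ) : Multiplicative (ι → ℤ) →* Circle where
  toFun v := Circle.exp (∑ j, v.toAdd j * θ j)
  map_one' := by simp
  map_mul' v w := by simp [add_mul, Finset.sum_add_distrib, Circle.exp_add]

theorem coe_latticeChar (θ : ι → ℝ) (v : Multiplicative (ι → ℤ)) :
    (latticeChar θ v : ℂ) = ∏ j, Complex.exp (v.toAdd j * Complex.I * θ j) := by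
  rw [latticeChar, MonoidHom.coe_mk, OneHom.coe_mk, Circle.coe_exp, ← Complex.exp_sum]
  push_cast
  rw [Finset.sum_mul]
  simp only [mul_right_comm]

theorem latticeChar_ofAdd_single [DecidableEq ι] (θ : ι → ℝ) (i : ι) :
    latticeChar θ (Multiplicative.ofAdd (Pi.single i 1)) = Circle.exp (θ i) := by
  simp [latticeChar, Pi.single_apply]

/-- Lebesgue measure on the fundamental domain `(-π, π]^ι` of the dual torus of `ℤ^ι`. -/
def torusMeasure (ι : Type*) [Fintype ι] : Measure (ι → ℝ) :=
  Measure.pi fun _ => volume.restrict (Set.Ioc (-Real.pi) Real.pi)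

instance : IsFiniteMeasure (torusMeasure ι) := by
  unfold torusMeasure
  infer_instance

theorem integral_exp_int_mul_I_mul (k : ℤ) :
    ∫ x : ℝ in Set.Ioc (-Real.pi) Real.pi, Complex.exp (k * Complex.I * x) =
      if k = 0 then (2 * Real.pi : ℂ) else 0 := by
  rw [← intervalIntegral.integral_of_le (by linarith [Real.pi_pos])]
  split_ifs with hk
  · simp only [hk, Int.cast_zero, zero_mul, Complex.exp_zero, intervalIntegral.integral_const,
      sub_neg_eq_add, Complex.real_smul, Complex.ofReal_add, mul_one, two_mul]
  · have hends : Complex.exp (k * Complex.I * Real.pi) =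
        Complex.exp (k * Complex.I * (-Real.pi : ℝ)) := by
      rw [Complex.exp_eq_exp_iff_exists_int]
      exact ⟨k, by push_cast; ring⟩
    rw [integral_exp_mul_complex (by simp [hk]), hends, sub_self, zero_div]

theorem integral_latticeChar (v : ι → ℤ) :
    ∫ θ, (latticeChar θ (Multiplicative.ofAdd v) : ℂ) ∂torusMeasure ι =
      if v = 0 then (2 * Real.pi : ℂ) ^ Fintype.card ι else 0 := by
  simp_rw [coe_latticeChar, torusMeasure, toAdd_ofAdd]
  rw [integral_fintype_prod_eq_prod fun j (x : ℝ) => Complex.exp (v j * Complex.I * x)]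
  simp [integral_exp_int_mul_I_mul, Finset.prod_ite_zero, funext_iff]

variable {Ω : Type*} [MeasurableSpace Ω] {P : Measure Ω} [IsFiniteMeasure P]

theorem integrable_latticeChar {V : Ω → ι → ℤ} (hV : Measurable V) :
    Integrable (Function.uncurry fun ω θ => (latticeChar θ (Multiplicative.ofAdd (V ω)) : ℂ))
      (P.prod (torusMeasure ι)) := by
  refine Integrable.of_bound (C := 1) (Measurable.aestronglyMeasurable ?_)
    (Eventually.of_forall fun _ => (Circle.norm_coe _).le)
  simp only [Function.uncurry_def, coe_latticeChar, toAdd_ofAdd]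
  fun_prop

theorem integral_integral_latticeChar {V : Ω → ι → ℤ} (hV : Measurable V) :
    ∫ θ, ∫ ω, (latticeChar θ (Multiplicative.ofAdd (V ω)) : ℂ) ∂P ∂torusMeasure ι =
      ((2 * Real.pi) ^ Fintype.card ι * P.real {ω | V ω = 0} : ℝ) := by
  rw [← integral_integral_swap (integrable_latticeChar hV)]
  simp_rw [integral_latticeChar]
  have hind : (fun ω => if V ω = 0 then (2 * Real.pi : ℂ) ^ Fintype.card ι else 0) =
      {ω | V ω = 0}.indicator fun _ => (2 * Real.pi : ℂ) ^ Fintype.card ι := by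
    ext ω
    simp [Set.indicator_apply]
  rw [hind, integral_indicator_const _ (measurableSet_eq_fun hV measurable_const)]
  simp [mul_comm]

theorem exp_neg_mul_sin_sq_le {t : ℝ} (ht : 0 ≤ t) {x : ℝ} (hx : |x| ≤ Real.pi / 2) :
    Real.exp (-(t * Real.sin x ^ 2)) ≤ Real.exp (-(t * (2 / Real.pi) ^ 2) * x ^ 2) := by
  have hsq : (2 / Real.pi * |x|) ^ 2 ≤ |Real.sin x| ^ 2 := by
    gcongr
    exact Real.mul_abs_le_abs_sin hx
  rw [mul_pow, sq_abs, sq_abs] at hsq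
  rw [Real.exp_le_exp, neg_mul, mul_assoc]
  gcongr

theorem integral_exp_neg_mul_sin_sq_le {t : ℝ} (ht : 0 < t) :
    ∫ x in Set.Ioc (-Real.pi) Real.pi, Real.exp (-(t * Real.sin x ^ 2)) ≤
      Real.pi * √(Real.pi / t) := by
  have hpi := Real.pi_pos
  set f : ℝ → ℝ := fun x => Real.exp (-(t * Real.sin x ^ 2)) with hf
  set b : ℝ := t * (2 / Real.pi) ^ 2 with hb
  have hcont : Continuous f := by fun_prop
  have hper : Function.Periodic f Real.pi := fun x => by simp [hf, Real.sin_add_pi]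
  have hgauss : Integrable fun x : ℝ => Real.exp (-b * x ^ 2) :=
    integrable_exp_neg_mul_sq (by positivity)
  have hhalf : ∫ x in Set.Ioc (-(Real.pi / 2)) (Real.pi / 2), f x ≤ √(Real.pi / b) :=
    calc _ ≤ ∫ x in Set.Ioc (-(Real.pi / 2)) (Real.pi / 2), Real.exp (-b * x ^ 2) :=
          setIntegral_mono_on hcont.integrableOn_Ioc hgauss.integrableOn measurableSet_Ioc
            fun x hx => exp_neg_mul_sin_sq_le ht.le (abs_le.2 ⟨hx.1.le, hx.2⟩)
      _ ≤ ∫ x, Real.exp (-b * x ^ 2) :=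
          setIntegral_le_integral hgauss (Eventually.of_forall fun x => (Real.exp_pos _).le)
      _ = √(Real.pi / b) := integral_gaussian b
  have hfold : ∫ x in Set.Ioc (-Real.pi) Real.pi, f x =
      2 * ∫ x in Set.Ioc (-(Real.pi / 2)) (Real.pi / 2), f x := by
    rw [← intervalIntegral.integral_of_le (by linarith),
      ← intervalIntegral.integral_of_le (by linarith)]
    have hzsmul := hper.intervalIntegral_add_zsmul_eq 2 (-Real.pi)
      fun _ _ => hcont.intervalIntegrable _ _
    rw [hper.intervalIntegral_add_eq (-Real.pi) (-(Real.pi / 2))] at hzsmul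
    simp only [zsmul_eq_mul, Int.cast_ofNat] at hzsmul
    convert hzsmul using 3 <;> ring
  have hsqrt : √(Real.pi / b) = Real.pi / 2 * √(Real.pi / t) := by
    rw [← Real.sqrt_sq (by positivity : 0 ≤ Real.pi / 2), ← Real.sqrt_mul (by positivity), hb]
    congr 1
    field_simp
  rw [hfold]
  linarith

theorem measureReal_eq_zero_le_of_norm_charFun_le {V : Ω → ι → ℤ} (hV : Measurable V) {c t : ℝ}
    (hc : 0 ≤ c) (ht : 0 < t)
    (hbound : ∀ θ, ‖∫ ω, (latticeChar θ (Multiplicative.ofAdd (V ω)) : ℂ) ∂P‖ ≤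
      c * ∏ j, Real.exp (-(t * Real.sin (θ j) ^ 2))) :
    P.real {ω | V ω = 0} ≤ c * (√(Real.pi / t) / 2) ^ Fintype.card ι := by
  have hint : Integrable (fun θ => ∏ j, Real.exp (-(t * Real.sin (θ j) ^ 2))) (torusMeasure ι) :=
    Integrable.fintype_prod (f := fun _ x => Real.exp (-(t * Real.sin x ^ 2)))
      fun _ => Continuous.integrableOn_Ioc (by fun_prop)
  have hscaled : (2 * Real.pi) ^ Fintype.card ι * P.real {ω | V ω = 0} ≤
      c * (Real.pi * √(Real.pi / t)) ^ Fintype.card ι :=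
    calc (2 * Real.pi) ^ Fintype.card ι * P.real {ω | V ω = 0}
        = ‖∫ θ, ∫ ω, (latticeChar θ (Multiplicative.ofAdd (V ω)) : ℂ) ∂P ∂torusMeasure ι‖ := by
          rw [integral_integral_latticeChar hV, Complex.norm_real, Real.norm_of_nonneg]
          positivity
      _ ≤ ∫ θ, c * ∏ j, Real.exp (-(t * Real.sin (θ j) ^ 2)) ∂torusMeasure ι :=
          norm_integral_le_of_norm_le (hint.const_mul c) (Eventually.of_forall hbound)
      _ = c * (∫ x in Set.Ioc (-Real.pi) Real.pi,
            Real.exp (-(t * Real.sin x ^ 2))) ^ Fintype.card ι := by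
          rw [integral_const_mul, torusMeasure,
            integral_fintype_prod_eq_pow fun x : ℝ => Real.exp (-(t * Real.sin x ^ 2))]
      _ ≤ c * (Real.pi * √(Real.pi / t)) ^ Fintype.card ι := by
          gcongr
          exact integral_exp_neg_mul_sin_sq_le ht
  refine le_of_mul_le_mul_left (hscaled.trans_eq ?_)
    (by positivity : 0 < (2 * Real.pi) ^ Fintype.card ι)
  rw [mul_left_comm, ← mul_pow]
  ring_nf

end LatticeFourier

section CosineSums

theorem norm_two_mul_cos_le (y : ℝ) : ‖((2 * Real.cos y : ℝ) : ℂ)‖ ≤ 2 - Real.sin y ^ 2 / 3 := by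
  rw [Complex.norm_real, Real.norm_eq_abs, abs_le]
  constructor <;> nlinarith [Real.sin_sq_add_cos_sq y, Real.neg_one_le_cos y, Real.cos_le_one y]

theorem norm_exp_add_two_mul_cos_le (x y : ℝ) :
    ‖Complex.exp (x * Complex.I) + (2 * Real.cos y : ℝ)‖ ≤
      3 - (Real.sin x ^ 2 + Real.sin y ^ 2) / 3 := by
  have hnonneg : 0 ≤ 3 - (Real.sin x ^ 2 + Real.sin y ^ 2) / 3 := by
    linarith [Real.sin_sq_le_one x, Real.sin_sq_le_one y]
  refine le_of_sq_le_sq ?_ hnonneg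
  rw [← Complex.normSq_eq_norm_sq, Complex.normSq_apply]
  simp only [Complex.add_re, Complex.add_im, Complex.exp_ofReal_mul_I_re,
    Complex.exp_ofReal_mul_I_im, Complex.ofReal_re, Complex.ofReal_im]
  nlinarith [Real.sin_sq_add_cos_sq x, Real.sin_sq_add_cos_sq y,
    sq_nonneg (Real.cos x - Real.cos y), sq_nonneg (Real.sin x ^ 2 + Real.sin y ^ 2)]

theorem norm_exp_add_sum_two_mul_cos_le {ι : Type*} {s : Finset ι} (hs : s.Nonempty) (x : ℝ)
    (θ : ι → ℝ) :
    ‖Complex.exp (x * Complex.I) + ∑ k ∈ s, ((2 * Real.cos (θ k) : ℝ) : ℂ)‖ ≤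
      1 + 2 * s.card - (Real.sin x ^ 2 + ∑ k ∈ s, Real.sin (θ k) ^ 2) / 3 := by
  induction hs using Finset.Nonempty.cons_induction with
  | singleton i =>
    simp only [Finset.sum_singleton, Finset.card_singleton, Nat.cast_one]
    linarith [norm_exp_add_two_mul_cos_le x (θ i)]
  | cons i s hi _ ih =>
    rw [Finset.sum_cons, Finset.sum_cons, Finset.card_cons, add_left_comm]
    refine (norm_add_le_of_le (norm_two_mul_cos_le (θ i)) ih).trans_eq ?_
    push_cast
    ring

end CosineSums

section WordDistance

theorem le_add_dist_of_adj {V : Type*} {Γ : SimpleGraph V} (hΓ : Γ.Connected) {f : V → ℕ}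
    (hf : ∀ u v, Γ.Adj u v → f v ≤ f u + 1) (u v : V) : f v ≤ f u + Γ.dist u v := by
  obtain ⟨walk, hwalk⟩ := hΓ.exists_walk_length_eq_dist u v
  rw [← hwalk]
  clear hwalk
  induction walk with
  | nil => simp
  | cons hadj _ ih =>
    rw [SimpleGraph.Walk.length_cons]
    linarith [hf _ _ hadj]

/-- The `ℓ¹`-norm on `ℤ^ι`, with natural number values so as to be compared with graph
distances. -/
def l1Norm {ι : Type*} [Fintype ι] (v : ι → ℤ) : ℕ :=
  ∑ i, (v i).natAbs

variable {ι : Type*} [Fintype ι]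

theorem l1Norm_eq_zero {v : ι → ℤ} : l1Norm v = 0 ↔ v = 0 := by
  simp [l1Norm, funext_iff]

theorem l1Norm_add_le (v w : ι → ℤ) : l1Norm (v + w) ≤ l1Norm v + l1Norm w := by
  rw [l1Norm, l1Norm, l1Norm, ← Finset.sum_add_distrib]
  exact Finset.sum_le_sum fun i _ => Int.natAbs_add_le (v i) (w i)

theorem l1Norm_neg (v : ι → ℤ) : l1Norm (-v) = l1Norm v := by
  simp [l1Norm]

theorem l1Norm_single_one [DecidableEq ι] (i : ι) : l1Norm (Pi.single i 1) = 1 := by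
  simp [l1Norm, Pi.single_apply, apply_ite Int.natAbs]

variable {G : Type*} [Group G]

theorem l1Norm_le_dist {S : Finset G} (hS : (cayleyGraph S).Connected)
    (ab : G →* Multiplicative (ι → ℤ)) (hab : ∀ a ∈ S, l1Norm (ab a).toAdd ≤ 1) (x : G) :
    l1Norm (ab x).toAdd ≤ (cayleyGraph S).dist 1 x := by
  have step_le : ∀ u v : G, l1Norm (ab (v * u⁻¹)).toAdd ≤ 1 →
      l1Norm (ab v).toAdd ≤ l1Norm (ab u).toAdd + 1 := by
    intro u v huv
    have h := l1Norm_add_le (ab (v * u⁻¹)).toAdd (ab u).toAdd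
    rw [← toAdd_mul, ← map_mul, inv_mul_cancel_right] at h
    linarith
  have hadj : ∀ u v, (cayleyGraph S).Adj u v →
      l1Norm (ab v).toAdd ≤ l1Norm (ab u).toAdd + 1 := by
    rintro u v ⟨-, h | h⟩
    · exact step_le u v (hab _ h)
    · refine step_le u v ?_
      rw [← l1Norm_neg, ← toAdd_inv, ← map_inv, mul_inv_rev, inv_inv]
      exact hab _ h
  have h := le_add_dist_of_adj hS hadj 1 x
  rwa [map_one, toAdd_one, l1Norm_eq_zero.2 rfl, zero_add] at h

theorem freeGroupAbelianize_of {d : ℕ} (i : Fin d) :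
    freeGroupAbelianize d (FreeGroup.of i) = Multiplicative.ofAdd (Pi.single i 1) :=
  FreeGroup.lift_apply_of

theorem mem_freeGroupGens {d : ℕ} {a : FreeGroup (Fin d)} :
    a ∈ freeGroupGens d ↔ ∃ i, a = FreeGroup.of i ∨ a = (FreeGroup.of i)⁻¹ := by
  simp [freeGroupGens, exists_or, eq_comm]

theorem l1Norm_freeGroupAbelianize_of_mem_gens {d : ℕ} {a : FreeGroup (Fin d)}
    (ha : a ∈ freeGroupGens d) : l1Norm (freeGroupAbelianize d a).toAdd = 1 := by
  obtain ⟨i, rfl | rfl⟩ := mem_freeGroupGens.1 ha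
  · rw [freeGroupAbelianize_of, toAdd_ofAdd, l1Norm_single_one]
  · rw [map_inv, toAdd_inv, l1Norm_neg, freeGroupAbelianize_of, toAdd_ofAdd, l1Norm_single_one]

end WordDistance

section FiniteValued

variable {Ω T : Type*} [MeasurableSpace Ω] {Y : Ω → T}

theorem measurable_comp_of_countable [Countable T] (hY : ∀ t, MeasurableSet {ω | Y ω = t})
    {β : Type*} [MeasurableSpace β] (φ : T → β) : Measurable fun ω => φ (Y ω) := by
  let _ : MeasurableSpace T := ⊤
  exact measurable_from_top.comp (measurable_to_countable' hY)

variable {P : Measure Ω} [IsFiniteMeasure P] {F : Type*} [NormedAddCommGroup F]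

theorem integrable_comp_of_finite [Finite T] (hY : ∀ t, MeasurableSet {ω | Y ω = t}) (φ : T → F) :
    Integrable (fun ω => φ (Y ω)) P := by
  let _ : MeasurableSpace T := ⊤
  exact Integrable.of_finite.comp_measurable (measurable_to_countable' hY)

theorem integral_comp_eq_sum [Fintype T] [NormedSpace ℝ F] [CompleteSpace F]
    (hY : ∀ t, MeasurableSet {ω | Y ω = t}) (φ : T → F) :
    ∫ ω, φ (Y ω) ∂P = ∑ t, P.real {ω | Y ω = t} • φ t := by
  let _ : MeasurableSpace T := ⊤
  have hmeas : Measurable Y := measurable_to_countable' hY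
  rw [← integral_map hmeas.aemeasurable (Integrable.of_finite (f := φ)).aestronglyMeasurable,
    integral_fintype Integrable.of_finite]
  simp_rw [map_measureReal_apply hmeas MeasurableSpace.measurableSet_top]
  rfl

end FiniteValued

section MemoryKernel

variable {T : Type*} [Fintype T] [DecidableEq T]

/-- The probability that a walker recalling the step `b` takes the step `a`: it repeats `b` with
probability `p` and otherwise takes a uniform step different from `b`. -/
def memoryKernel (p : ℝ) (b a : T) : ℝ :=
  if a = b then p else (1 - p) / (Fintype.card T - 1)

/-- The conditional mean of `ψ` over the next step as a function of the recalled step. -/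
def memoryMean (p : ℝ) (ψ : T → ℂ) (b : T) : ℂ :=
  ∑ a, memoryKernel p b a • ψ a

variable {p : ℝ}

theorem memoryKernel_nonneg (hp0 : 0 ≤ p) (hp1 : p ≤ 1) (b a : T) : 0 ≤ memoryKernel p b a := by
  have hcard : (1 : ℝ) ≤ Fintype.card T := by exact_mod_cast Fintype.card_pos_iff.2 ⟨b⟩
  rw [memoryKernel]
  split_ifs
  · exact hp0
  · exact div_nonneg (by linarith) (by linarith)

theorem sum_memoryKernel_smul {M : Type*} [AddCommGroup M] [Module ℝ M] (p : ℝ) (b : T)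
    (ψ : T → M) :
    ∑ a, memoryKernel p b a • ψ a =
      p • ψ b + ((1 - p) / (Fintype.card T - 1) : ℝ) • ∑ a ∈ Finset.univ.erase b, ψ a := by
  rw [← Finset.add_sum_erase _ _ (Finset.mem_univ b), memoryKernel, if_pos rfl, Finset.smul_sum]
  congr 1
  refine Finset.sum_congr rfl fun a ha => ?_
  rw [memoryKernel, if_neg (Finset.ne_of_mem_erase ha)]

theorem sum_memoryKernel_le_one (hp1 : p ≤ 1) (b : T) : ∑ a, memoryKernel p b a ≤ 1 := by
  have hsum := sum_memoryKernel_smul p b fun _ => (1 : ℝ)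
  simp only [smul_eq_mul, mul_one, Finset.sum_const, Finset.card_erase_of_mem (Finset.mem_univ b),
    Finset.card_univ, nsmul_eq_mul, Nat.cast_pred (Fintype.card_pos_iff.2 ⟨b⟩)] at hsum
  rw [hsum, div_mul_eq_mul_div, mul_div_assoc]
  linarith [mul_le_of_le_one_right (sub_nonneg.2 hp1) (div_self_le_one ((Fintype.card T : ℝ) - 1))]

theorem norm_memoryMean_le (hp0 : 0 ≤ p) (hp1 : p ≤ 1) (ψ : T → ℂ) : ‖memoryMean p ψ‖ ≤ ‖ψ‖ := by
  refine (pi_norm_le_iff_of_nonneg (norm_nonneg ψ)).2 fun b => ?_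
  calc ‖memoryMean p ψ b‖ ≤ ∑ a, memoryKernel p b a * ‖ψ‖ := by
        refine norm_sum_le_of_le _ fun a _ => ?_
        have hker := memoryKernel_nonneg hp0 hp1 b a
        rw [norm_smul, Real.norm_of_nonneg hker]
        gcongr
        exact norm_le_pi_norm ψ a
    _ ≤ ‖ψ‖ := by
        rw [← Finset.sum_mul]
        exact mul_le_of_le_one_left (norm_nonneg ψ) (sum_memoryKernel_le_one hp1 b)

end MemoryKernel

namespace ERW

variable {G : Type*} [Group G] [DecidableEq G] {d : ℕ} {p : ℝ}
  {Ω : Type*} [MeasurableSpace Ω] {P : Measure Ω} (E : ERW G d p Ω P)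

/-- The steps of the walk as generators, numbered from `0`: `E.step k` is `g (k + 1)`. -/
def step (k : ℕ) (ω : Ω) : E.S :=
  ⟨E.g (k + 1) ω, E.mem_S (k + 1) (by omega) ω⟩

/-- The first `n` steps of the walk. -/
def path (n : ℕ) (ω : Ω) (i : Fin n) : E.S :=
  E.step i ω

theorem map_pos {M : Type*} [CommMonoid M] (χ : G →* M) (n : ℕ) (ω : Ω) :
    χ (E.pos n ω) = ∏ k ∈ Finset.range n, χ (E.step k ω) := by
  induction n with
  | zero => simp [pos]
  | succ n ih => rw [pos, map_mul, ih, Finset.prod_range_succ, mul_comm, step]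

theorem measurableSet_step_eq (k : ℕ) (a : E.S) : MeasurableSet {ω | E.step k ω = a} := by
  simp_rw [step, Subtype.ext_iff]
  exact E.meas_g (k + 1) a

theorem measurableSet_path_eq (n : ℕ) (s : Fin n → E.S) : MeasurableSet {ω | E.path n ω = s} := by
  simp_rw [funext_iff, Set.ofPred_forall]
  exact MeasurableSet.iInter fun i => E.measurableSet_step_eq i (s i)

theorem measurable_toAdd_map_pos {M : Type*} [AddCommMonoid M] [MeasurableSpace M]
    [MeasurableAdd₂ M] (χ : G →* Multiplicative M) (n : ℕ) :
    Measurable fun ω => (χ (E.pos n ω)).toAdd := by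
  simp_rw [E.map_pos χ, toAdd_prod]
  exact Finset.measurable_sum _ fun k _ =>
    measurable_comp_of_countable (E.measurableSet_step_eq k) fun a : E.S => (χ a).toAdd

theorem setOf_forall_g_eq (n : ℕ) (σ : ℕ → E.S) :
    {ω | ∀ k ∈ Finset.Icc 1 n, E.g k ω = σ (k - 1)} = {ω | ∀ k < n, E.step k ω = σ k} := by
  ext ω
  simp only [Set.mem_ofPred_eq, Finset.mem_Icc, step, Subtype.ext_iff]
  refine ⟨fun h k hk => h (k + 1) (by omega), fun h k hk => ?_⟩
  obtain ⟨j, rfl⟩ : ∃ j, k = j + 1 := ⟨k - 1, by omega⟩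
  exact h j (by omega)

theorem sum_memoryKernel_eq_card (n : ℕ) (σ : ℕ → E.S) (a : E.S) :
    ∑ D ∈ Finset.range n, memoryKernel p (σ D) a =
      p * ((Finset.Icc 1 n).filter fun k => (σ (k - 1) : G) = a).card +
        (1 - p) / ((d : ℝ) - 1) *
          (n - ((Finset.Icc 1 n).filter fun k => (σ (k - 1) : G) = a).card) := by
  have hcount : ((Finset.Icc 1 n).filter fun k => (σ (k - 1) : G) = a).card =
      ((Finset.range n).filter fun D => a = σ D).card := by
    rw [Finset.card_filter, Finset.card_filter, Finset.range_eq_Ico,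
      ← Finset.Ico_add_one_right_eq_Icc, ← zero_add 1, ← Finset.sum_Ico_add' _ 0 n 1]
    simp only [Nat.add_sub_cancel, Subtype.ext_iff, eq_comm]
  have hcompl : (((Finset.range n).filter fun D => ¬a = σ D).card : ℝ) =
      n - ((Finset.range n).filter fun D => a = σ D).card := by
    rw [eq_sub_iff_add_eq', ← Nat.cast_add, Finset.card_filter_add_card_filter_not,
      Finset.card_range]
  simp only [memoryKernel, Finset.sum_ite, Finset.sum_const, nsmul_eq_mul, hcompl, hcount,
    Fintype.card_coe, E.card_S]
  ring

theorem measureReal_forall_step_eq_and {n : ℕ} (hn : n ≠ 0) (σ : ℕ → E.S) (a : E.S) :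
    P.real {ω | (∀ k < n, E.step k ω = σ k) ∧ E.step n ω = a} =
      P.real {ω | ∀ k < n, E.step k ω = σ k} *
        ((n : ℝ)⁻¹ * ∑ D ∈ Finset.range n, memoryKernel p (σ D) a) := by
  have hupdate := E.update n (Nat.one_le_iff_ne_zero.2 hn) (fun k => σ (k - 1)) a a.2
  have hnext : {ω | E.g (n + 1) ω = a} = {ω | E.step n ω = a} := by
    simp only [step, Subtype.ext_iff]
  rw [E.setOf_forall_g_eq, hnext] at hupdate
  rw [measureReal_def, Set.ofPred_and, hupdate, E.sum_memoryKernel_eq_card, measureReal_def]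
  ring

theorem measureReal_path_eq_and {n : ℕ} (hn : n ≠ 0) (s : Fin n → E.S) (a : E.S) :
    P.real {ω | E.path n ω = s ∧ E.step n ω = a} =
      P.real {ω | E.path n ω = s} * ((n : ℝ)⁻¹ * ∑ D, memoryKernel p (s D) a) := by
  have : NeZero n := ⟨hn⟩
  have h := E.measureReal_forall_step_eq_and hn (fun k => s (Fin.ofNat n k)) a
  have hpath : ∀ ω, (∀ k < n, E.step k ω = s (Fin.ofNat n k)) ↔ E.path n ω = s := fun ω => by
    rw [← Fin.forall_iff (p := fun i => E.step i ω = s (Fin.ofNat n i)), funext_iff]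
    simp only [Fin.ofNat_val_eq_self, path]
  simpa only [hpath, Finset.sum_range, Fin.ofNat_val_eq_self] using h

theorem integral_path_mul_step [IsFiniteMeasure P] {n : ℕ} (hn : n ≠ 0) (φ : (Fin n → E.S) → ℂ)
    (ψ : E.S → ℂ) :
    ∫ ω, φ (E.path n ω) * ψ (E.step n ω) ∂P =
      ∫ ω, φ (E.path n ω) * ((n : ℝ)⁻¹ • ∑ D, memoryMean p ψ (E.path n ω D)) ∂P := by
  have hpair : ∀ t : (Fin n → E.S) × E.S,
      {ω | (E.path n ω, E.step n ω) = t} = {ω | E.path n ω = t.1 ∧ E.step n ω = t.2} := fun t => by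
    simp only [Prod.ext_iff]
  have hmeas : ∀ t : (Fin n → E.S) × E.S,
      MeasurableSet {ω | (E.path n ω, E.step n ω) = t} := fun t => by
    rw [hpair, Set.ofPred_and]
    exact (E.measurableSet_path_eq n t.1).inter (E.measurableSet_step_eq n t.2)
  rw [integral_comp_eq_sum hmeas fun t => φ t.1 * ψ t.2, Fintype.sum_prod_type,
    integral_comp_eq_sum (E.measurableSet_path_eq n) fun s =>
      φ s * ((n : ℝ)⁻¹ • ∑ D, memoryMean p ψ (s D))]
  refine Finset.sum_congr rfl fun s _ => ?_
  simp only [hpair, E.measureReal_path_eq_and hn, memoryMean, Complex.real_smul]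
  rw [Finset.sum_comm]
  simp only [Finset.mul_sum, Finset.sum_mul, Complex.ofReal_mul, Complex.ofReal_sum]
  refine Finset.sum_congr rfl fun D _ => Finset.sum_congr rfl fun a _ => ?_
  ring

/-- The mixed moment `𝔼[h 0 (g 1) ⋯ h (n - 1) (g n)]` of the first `n` steps. -/
def stepMoment (n : ℕ) (h : ℕ → E.S → ℂ) : ℂ :=
  ∫ ω, ∏ i ∈ Finset.range n, h i (E.step i ω) ∂P

theorem norm_stepMoment_le [IsProbabilityMeasure P] (n : ℕ) (h : ℕ → E.S → ℂ) :
    ‖E.stepMoment n h‖ ≤ ∏ i ∈ Finset.range n, ‖h i‖ := by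
  have hprod : ∀ ω, ‖∏ i ∈ Finset.range n, h i (E.step i ω)‖ ≤ ∏ i ∈ Finset.range n, ‖h i‖ :=
    fun ω => by
      rw [norm_prod]
      gcongr with i
      exact norm_le_pi_norm (h i) _
  simpa [stepMoment] using norm_integral_le_of_norm_le_const (μ := P) (Eventually.of_forall hprod)

theorem stepMoment_update {n : ℕ} (h : ℕ → E.S → ℂ) (D : Fin n) (ψ : E.S → ℂ) :
    E.stepMoment n (Function.update h D (h D * ψ)) =
      ∫ ω, (∏ i : Fin n, h i (E.path n ω i)) * ψ (E.path n ω D) ∂P := by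
  rw [stepMoment]
  congr 1 with ω
  simp_rw [Function.apply_update (fun i (φ : E.S → ℂ) => φ (E.step i ω))]
  have hD := Finset.mem_range.2 D.2
  rw [Finset.prod_update_of_mem hD, Finset.sdiff_singleton_eq_erase, Pi.mul_apply, mul_right_comm,
    Finset.mul_prod_erase _ (fun i => h i (E.step i ω)) hD, Finset.prod_range]
  rfl

theorem stepMoment_succ [IsFiniteMeasure P] {n : ℕ} (hn : n ≠ 0) (h : ℕ → E.S → ℂ) :
    E.stepMoment (n + 1) h = (n : ℝ)⁻¹ • ∑ D ∈ Finset.range n,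
      E.stepMoment n (Function.update h D (h D * memoryMean p (h n))) := by
  let φ : (Fin n → E.S) → ℂ := fun s => ∏ i : Fin n, h i (s i)
  calc E.stepMoment (n + 1) h = ∫ ω, φ (E.path n ω) * h n (E.step n ω) ∂P := by
        simp only [stepMoment, Finset.prod_range_succ, Finset.prod_range, φ, path]
    _ = ∫ ω, φ (E.path n ω) * ((n : ℝ)⁻¹ • ∑ D, memoryMean p (h n) (E.path n ω D)) ∂P :=
        E.integral_path_mul_step hn φ (h n)
    _ = (n : ℝ)⁻¹ • ∑ D, ∫ ω, φ (E.path n ω) * memoryMean p (h n) (E.path n ω D) ∂P := by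
        simp_rw [mul_smul_comm, Finset.mul_sum]
        rw [integral_smul, integral_finsetSum]
        exact fun D _ => integrable_comp_of_finite (E.measurableSet_path_eq n)
          fun s => φ s * memoryMean p (h n) (s D)
    _ = _ := by simp only [Finset.sum_range, E.stepMoment_update, φ]

theorem isMemoryMoment_stepMoment [IsProbabilityMeasure P] :
    IsMemoryMoment (memoryMean p) E.stepMoment where
  norm_le := E.norm_stepMoment_le
  succ _ h hn := E.stepMoment_succ hn h

theorem norm_integral_map_pos_le [IsProbabilityMeasure P] (hp0 : 0 ≤ p) (hp1 : p ≤ 1)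
    (χ : G →* Circle) {x : ℝ} (hx0 : 0 ≤ x) (hx1 : x < 1)
    (hχ : ∀ b : E.S, ‖memoryMean p (fun a : E.S => (χ a : ℂ)) b‖ ≤ 1 - x) (n : ℕ) :
    ‖∫ ω, (χ (E.pos n ω) : ℂ) ∂P‖ ≤ Real.exp (1 - x * n / 4) := by
  set e : E.S → ℂ := fun a => χ a
  have hS : Nonempty E.S := P.nonempty_of_neZero.map (E.step 0)
  have norm_e : ‖e‖ = 1 :=
    le_antisymm ((pi_norm_le_iff_of_nonneg zero_le_one).2 fun a => (Circle.norm_coe (χ a)).le)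
      ((Circle.norm_coe (χ hS.some)).symm.trans_le (norm_le_pi_norm e hS.some))
  have norm_mean_e : ‖memoryMean p e‖ ≤ (1 - x) * ‖e‖ := by
    rw [norm_e, mul_one, pi_norm_le_iff_of_nonneg (by linarith)]
    exact hχ
  have hmoment : ∫ ω, (χ (E.pos n ω) : ℂ) ∂P = E.stepMoment n fun _ => e := by
    rw [stepMoment]
    congr 1 with ω
    exact E.map_pos (Circle.coeHom.comp χ) n ω
  have hhalf : (n : ℝ) ≤ 2 * (n / 2 : ℕ) + 1 := by exact_mod_cast (by omega : n ≤ 2 * (n / 2) + 1)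
  calc ‖∫ ω, (χ (E.pos n ω) : ℂ) ∂P‖
      ≤ ((1 + (1 - x)) / 2) ^ (n / 2) * ‖e‖ ^ n := by
        rw [hmoment]
        exact E.isMemoryMoment_stepMoment.norm_const_le (norm_memoryMean_le hp0 hp1)
          (by linarith) (by linarith) norm_mean_e n
    _ ≤ Real.exp (-(x / 2)) ^ (n / 2) := by
        rw [norm_e, one_pow, mul_one]
        gcongr
        linarith [Real.add_one_le_exp (-(x / 2))]
    _ ≤ Real.exp (1 - x * n / 4) := by
        rw [← Real.exp_nat_mul, Real.exp_le_exp]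
        nlinarith

end ERW

section FreeGroupCharacters

variable {d : ℕ}

theorem freeGroup_of_ne_inv_of (i j : Fin d) : FreeGroup.of i ≠ (FreeGroup.of j)⁻¹ := by
  intro h
  have hcoord := congrFun (congrArg (fun x => (freeGroupAbelianize d x).toAdd) h) i
  simp only [map_inv, freeGroupAbelianize_of, toAdd_inv, toAdd_ofAdd, Pi.neg_apply,
    Pi.single_apply, if_true] at hcoord
  split_ifs at hcoord
  all_goals omega

theorem sum_freeGroupGens {M : Type*} [AddCommMonoid M] (f : FreeGroup (Fin d) → M) :
    ∑ a ∈ freeGroupGens d, f a = ∑ i, (f (FreeGroup.of i) + f (FreeGroup.of i)⁻¹) := by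
  have hdisj : Disjoint (Finset.univ.image fun i : Fin d => FreeGroup.of i)
      (Finset.univ.image fun i => (FreeGroup.of i)⁻¹) := by
    simp only [Finset.disjoint_left, Finset.mem_image, Finset.mem_univ, true_and, not_exists]
    rintro _ ⟨i, rfl⟩ j
    exact (freeGroup_of_ne_inv_of i j).symm
  rw [freeGroupGens, Finset.sum_union hdisj, Finset.sum_image FreeGroup.of_injective.injOn,
    Finset.sum_image fun _ _ _ _ h => FreeGroup.of_injective (inv_injective h),
    Finset.sum_add_distrib]

theorem card_freeGroupGens : (freeGroupGens d).card = 2 * d := by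
  rw [Finset.card_eq_sum_ones, sum_freeGroupGens]
  simp [mul_comm]

/-- The character of the free group sending the generator `a_j` to `exp (i θ_j)`. -/
def freeGroupChar (θ : Fin d → ℝ) : FreeGroup (Fin d) →* Circle :=
  (latticeChar θ).comp (freeGroupAbelianize d)

theorem freeGroupChar_of (θ : Fin d → ℝ) (i : Fin d) :
    freeGroupChar θ (FreeGroup.of i) = Circle.exp (θ i) := by
  rw [freeGroupChar, MonoidHom.comp_apply, freeGroupAbelianize_of, latticeChar_ofAdd_single]

theorem exists_freeGroupChar_eq_exp (θ : Fin d → ℝ) {b : FreeGroup (Fin d)}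
    (hb : b ∈ freeGroupGens d) :
    ∃ i, ∃ x : ℝ, freeGroupChar θ b = Circle.exp x ∧ Real.cos x = Real.cos (θ i) ∧
      Real.sin x ^ 2 = Real.sin (θ i) ^ 2 := by
  obtain ⟨i, rfl | rfl⟩ := mem_freeGroupGens.1 hb
  · exact ⟨i, θ i, freeGroupChar_of θ i, rfl, rfl⟩
  · refine ⟨i, -θ i, ?_, Real.cos_neg _, by rw [Real.sin_neg, neg_sq]⟩
    rw [map_inv, freeGroupChar_of, Circle.exp_neg]

theorem coe_exp_add_coe_exp_neg (x : ℝ) :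
    (Circle.exp x + Circle.exp (-x) : ℂ) = (2 * Real.cos x : ℝ) := by
  simp [Complex.two_cos, Complex.exp_neg]

theorem sum_freeGroupChar (θ : Fin d → ℝ) :
    ∑ a ∈ freeGroupGens d, (freeGroupChar θ a : ℂ) = ∑ i, ((2 * Real.cos (θ i) : ℝ) : ℂ) := by
  rw [sum_freeGroupGens]
  simp only [map_inv, freeGroupChar_of, ← Circle.exp_neg, coe_exp_add_coe_exp_neg]

theorem norm_sum_freeGroupChar_sub_le (hd : 2 ≤ d) (θ : Fin d → ℝ) {b : FreeGroup (Fin d)}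
    (hb : b ∈ freeGroupGens d) :
    ‖∑ a ∈ freeGroupGens d, (freeGroupChar θ a : ℂ) - freeGroupChar θ b‖ ≤
      2 * d - 1 - (∑ i, Real.sin (θ i) ^ 2) / 3 := by
  obtain ⟨i, x, hχ, hcos, hsin⟩ := exists_freeGroupChar_eq_exp θ hb
  have : Nontrivial (Fin d) := Fin.nontrivial_iff_two_le.2 hd
  obtain ⟨j, hj⟩ := exists_ne i
  have hothers : (Finset.univ.erase i).Nonempty :=
    ⟨j, Finset.mem_erase.2 ⟨hj, Finset.mem_univ j⟩⟩
  have hcard : ((Finset.univ.erase i).card : ℝ) = d - 1 := by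
    rw [Finset.card_erase_of_mem (Finset.mem_univ i), Finset.card_univ, Fintype.card_fin,
      Nat.cast_pred (by omega)]
  have hsum : ∑ a ∈ freeGroupGens d, (freeGroupChar θ a : ℂ) - freeGroupChar θ b =
      Complex.exp ((-x : ℝ) * Complex.I) +
        ∑ k ∈ Finset.univ.erase i, ((2 * Real.cos (θ k) : ℝ) : ℂ) := by
    rw [sum_freeGroupChar, ← Finset.add_sum_erase _ _ (Finset.mem_univ i), hχ, ← hcos,
      ← coe_exp_add_coe_exp_neg, ← Circle.coe_exp]
    ring
  have h := norm_exp_add_sum_two_mul_cos_le hothers (-x) θ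
  rw [Real.sin_neg, neg_sq, hsin,
    Finset.add_sum_erase _ (fun k => Real.sin (θ k) ^ 2) (Finset.mem_univ i), hcard] at h
  rw [hsum]
  linarith

theorem norm_memoryMean_freeGroupChar_le (hd : 2 ≤ d) {p : ℝ} (hp0 : 0 ≤ p) (hp1 : p ≤ 1)
    (θ : Fin d → ℝ) {S : Finset (FreeGroup (Fin d))} (hS : S = freeGroupGens d) (b : S) :
    ‖memoryMean p (fun a : S => (freeGroupChar θ a : ℂ)) b‖ ≤
      1 - (1 - p) / (2 * d - 1) / 3 * ∑ i, Real.sin (θ i) ^ 2 := by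
  subst hS
  have hd' : (0 : ℝ) < 2 * d - 1 := by
    have : (2 : ℝ) ≤ d := by exact_mod_cast hd
    linarith
  have hq : 0 ≤ (1 - p) / (2 * d - 1) := div_nonneg (by linarith) hd'.le
  rw [memoryMean, sum_memoryKernel_smul, Fintype.card_coe, card_freeGroupGens, Nat.cast_mul,
    Nat.cast_ofNat, Finset.sum_erase_eq_sub (Finset.mem_univ b),
    Finset.sum_coe_sort _ fun a => (freeGroupChar θ a : ℂ)]
  calc _ ≤ p * 1 + (1 - p) / (2 * d - 1) * (2 * d - 1 - (∑ i, Real.sin (θ i) ^ 2) / 3) := by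
        refine norm_add_le_of_le ?_ ?_
        · rw [norm_smul, Circle.norm_coe, Real.norm_of_nonneg hp0]
        · rw [norm_smul, Real.norm_of_nonneg hq]
          gcongr
          exact norm_sum_freeGroupChar_sub_le hd θ b.2
    _ = _ := by
        field_simp
        ring

end FreeGroupCharacters

theorem sqrt_div_pow_eq_mul_rpow (a : ℝ) {x : ℝ} (hx : 0 ≤ x) (m : ℕ) :
    √(a / x) ^ m = √a ^ m * x ^ (-((m : ℝ) / 2)) := by
  rw [Real.sqrt_div' a hx, div_pow, Real.rpow_neg hx, Real.rpow_div_two_eq_sqrt _ hx,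
    Real.rpow_natCast, div_eq_mul_inv]

namespace ERW

variable {Ω : Type*} [MeasurableSpace Ω] {P : Measure Ω} {d : ℕ} {p : ℝ}
  (E : ERW (FreeGroup (Fin d)) (2 * d) p Ω P)

theorem l1Norm_abelianize_pos_le_dist (hS : E.S = freeGroupGens d) (n : ℕ) (ω : Ω) :
    l1Norm (freeGroupAbelianize d (E.pos n ω)).toAdd ≤ E.dist n ω :=
  l1Norm_le_dist E.tree.connected (freeGroupAbelianize d)
    (fun _ ha => (l1Norm_freeGroupAbelianize_of_mem_gens (hS ▸ ha)).le) _

variable [IsProbabilityMeasure P]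

theorem norm_charFun_abelianize_pos_le (hd : 2 ≤ d) (hp0 : 0 ≤ p) (hp1 : p ≤ 1)
    (hS : E.S = freeGroupGens d) (n : ℕ) (θ : Fin d → ℝ) :
    ‖∫ ω, (latticeChar θ (freeGroupAbelianize d (E.pos n ω)) : ℂ) ∂P‖ ≤
      Real.exp 1 *
        ∏ j, Real.exp (-((1 - p) / (2 * d - 1) / 12 * n * Real.sin (θ j) ^ 2)) := by
  have hd' : (2 : ℝ) ≤ d := by exact_mod_cast hd
  set q : ℝ := (1 - p) / (2 * d - 1) with hq
  have hq0 : 0 ≤ q := div_nonneg (by linarith) (by linarith)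
  have hqd : q * d ≤ 1 := by
    rw [hq, div_mul_eq_mul_div, div_le_one (by linarith)]
    nlinarith
  have hsum : ∑ i, Real.sin (θ i) ^ 2 ≤ d := by
    simpa using Finset.sum_le_card_nsmul Finset.univ _ 1 fun i _ => Real.sin_sq_le_one (θ i)
  have hx1 : q / 3 * ∑ i, Real.sin (θ i) ^ 2 < 1 := by
    nlinarith
  have h := E.norm_integral_map_pos_le hp0 hp1 (freeGroupChar θ) (by positivity) hx1
    (norm_memoryMean_freeGroupChar_le hd hp0 hp1 θ hS) n
  refine h.trans_eq ?_
  rw [← Real.exp_sum, ← Real.exp_add, Finset.sum_neg_distrib, ← Finset.mul_sum]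
  ring_nf

theorem exists_measureReal_abelianize_pos_eq_zero_le (hd : 2 ≤ d) (hp0 : 0 ≤ p) (hp1 : p < 1)
    (hS : E.S = freeGroupGens d) :
    ∃ C : ℝ, 0 < C ∧ ∀ n : ℕ, 1 ≤ n →
      P.real {ω | (freeGroupAbelianize d (E.pos n ω)).toAdd = 0} ≤
        C * (n : ℝ) ^ (-((d : ℝ) / 2)) := by
  have hd' : (2 : ℝ) ≤ d := by exact_mod_cast hd
  set t : ℝ := (1 - p) / (2 * d - 1) / 12
  have ht : 0 < t := div_pos (div_pos (by linarith) (by linarith)) (by norm_num)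
  refine ⟨Real.exp 1 * (√(Real.pi / t) / 2) ^ d, by positivity, fun n hn => ?_⟩
  have hn' : (0 : ℝ) < n := by exact_mod_cast hn
  refine (measureReal_eq_zero_le_of_norm_charFun_le
    (E.measurable_toAdd_map_pos (freeGroupAbelianize d) n) (Real.exp_pos 1).le
    (mul_pos ht hn') (E.norm_charFun_abelianize_pos_le hd hp0 hp1.le hS n)).trans_eq ?_
  rw [Fintype.card_fin, div_mul_eq_div_div, div_pow, sqrt_div_pow_eq_mul_rpow _ hn'.le, div_pow]
  ring

end ERW

/-- on the free group `Z^{*d}` of rank `d ≥ 2` with its standard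
`2d`-element symmetric generating set (so the Cayley graph is the `2d`-regular
tree), the word-metric distance `Δ n` of the ERW dominates the `ℓ¹`-norm of the
multidimensional ERW `S n` on `ℤ^d` obtained by abelianizing the step sequence
(equivalently, of the abelianization of the position `w n`); consequently there is
`C > 0` with `P(Δ n = 0) ≤ C * n^(-d/2)` for all `n ≥ 1`. -/
theorem erw_free_group_return_prob
    {Ω : Type*} [MeasurableSpace Ω]
    {P : Measure Ω} [IsProbabilityMeasure P]
    (d : ℕ) (hd : 2 ≤ d) (p : ℝ) (hp0 : 0 ≤ p) (hp1 : p < 1)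
    (E : ERW (FreeGroup (Fin d)) (2 * d) p Ω P)
    (hS : E.S = freeGroupGens d) :
    (∀ n : ℕ, ∀ ω : Ω,
      ∑ i : Fin d,
          (Multiplicative.toAdd (freeGroupAbelianize d (E.pos n ω)) i).natAbs
        ≤ E.dist n ω) ∧
    ∃ C : ℝ, 0 < C ∧ ∀ n : ℕ, 1 ≤ n →
      (P {ω | E.dist n ω = 0}).toReal ≤ C * (n : ℝ) ^ (-((d : ℝ) / 2)) := by
  have hdist := E.l1Norm_abelianize_pos_le_dist hS
  obtain ⟨C, hC, hreturn⟩ := E.exists_measureReal_abelianize_pos_eq_zero_le hd hp0 hp1 hS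
  refine ⟨hdist, C, hC, fun n hn => (measureReal_mono ?_).trans (hreturn n hn)⟩
  intro ω (hω : E.dist n ω = 0)
  exact l1Norm_eq_zero.1 (Nat.le_zero.1 (hω ▸ hdist n ω))

end
end
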